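/- arXiv:2002.00465 — 6 statements merged into one kernel-verified Lean document; each statement's English description precedes it below -/
import Mathlib

section
/- Let β,γ > -1 with max{β,γ} ≥ -1/2, let q ≥ 2, and let (c_n)_{n≥1} be a real sequence with Ω_q(c) := (Σ_{n=1}^∞ |c_n|^q·n^{(max{β,γ}+3/2)(q-2)})^{1/q} < ∞. Then the series Σ_{n=1}^∞ c_n·p_n^{(β,γ)} converges in L_q(I,ω) to some function f ∈ L_q(I,ω), and there exists a constant C, depending only on β, γ, q, a, b and not on (c_n), such that ‖f‖_{L_q(I,ω)} ≤ C·Ω_q(c). -/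
open Real MeasureTheory Set Filter

/-- Normalizing factor `δ'_n(β,γ)` for the orthonormal Jacobi polynomials. -/
noncomputable def jacobiDelta (β γ : ℝ) (n : ℕ) : ℝ :=
  Real.sqrt ((β + γ + 2 * n + 1) * Real.Gamma (β + γ + n + 1) /
    (n.factorial * Real.Gamma (β + n + 1) * Real.Gamma (γ + n + 1)))

/-- The orthonormal Jacobi polynomial `p_n^{(β,γ)}` on `(a,b)`. -/
noncomputable def jacobiP (a b β γ : ℝ) (n : ℕ) (x : ℝ) : ℝ :=
  (-1 : ℝ) ^ n * (b - a) ^ (-(n : ℝ) - (β + γ + 1) / 2) * jacobiDelta β γ n *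
    (x - a) ^ (-β) * (b - x) ^ (-γ) *
    iteratedDeriv n (fun t : ℝ => (t - a) ^ (β + n) * (b - t) ^ (γ + n)) x

/-- Generalized binomial coefficient `binom(x, j) = Γ(x+1)/(j!·Γ(x-j+1))`. -/
noncomputable def genBinom (x : ℝ) (j : ℕ) : ℝ :=
  Real.Gamma (x + 1) / (j.factorial * Real.Gamma (x - j + 1))

/-- The coefficient `C̃_n^k(β,γ)`. -/
noncomputable def Ctilde (β γ : ℝ) (n k : ℕ) : ℝ :=
  ∑ i ∈ Finset.range (k + 1),
    (n.choose i : ℝ) * genBinom ((n : ℝ) + β) (n - i) * genBinom ((n : ℝ) + γ) i *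
      (k.choose i : ℝ) * genBinom ((n : ℝ) - i) (k - i) * (i.factorial : ℝ)

/-- The Euler Beta function `B(x,y) = Γ(x)Γ(y)/Γ(x+y)`. -/
noncomputable def betaB (x y : ℝ) : ℝ := Real.Gamma x * Real.Gamma y / Real.Gamma (x + y)

/-- The matrix coefficients `A^{α,β,γ}_{mn}`. -/
noncomputable def Acoef (α β γ : ℝ) (m n : ℕ) : ℝ :=
  jacobiDelta β γ m * jacobiDelta β γ n *
    ∑ k ∈ Finset.range (n + 1),
      (-1 : ℝ) ^ k * Ctilde β γ n k * betaB (α + β + k + 1) (γ + m + 1) /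
        Real.Gamma ((k : ℝ) + α - m + 1)

/-- The coefficient `c_n = δ'_n·n!·Γ(n+β+1)·Γ(n+γ+1)/4^n`. -/
noncomputable def cCoef (β γ : ℝ) (n : ℕ) : ℝ :=
  jacobiDelta β γ n * n.factorial * Real.Gamma (n + β + 1) * Real.Gamma (n + γ + 1) / 4 ^ n

/-- The weighted `L_p` norm `‖f‖_{L_p(I,ω)}` with `ω(x) = (x-a)^β (b-x)^γ`, `I = (a,b)`. -/
noncomputable def wnorm (a b β γ p : ℝ) (f : ℝ → ℝ) : ℝ :=
  (∫ x in Set.Ioo a b, |f x| ^ p * ((x - a) ^ β * (b - x) ^ γ)) ^ (1 / p)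

/-- Membership in the weighted Lebesgue space `L_p(I,ω)`. -/
def MemWLp (a b β γ p : ℝ) (f : ℝ → ℝ) : Prop :=
  MeasurableSet (Set.Ioo a b) ∧
    IntegrableOn (fun x : ℝ => |f x| ^ p * ((x - a) ^ β * (b - x) ^ γ)) (Set.Ioo a b)

/-- The right-sided Riemann–Liouville fractional integral `I^μ_{b-}`. -/
noncomputable def fracIntR (b μ : ℝ) (f : ℝ → ℝ) (x : ℝ) : ℝ :=
  (1 / Real.Gamma μ) * ∫ t in Set.Ioo x b, f t * (t - x) ^ (μ - 1)

/-- The left-sided Riemann–Liouville fractional integral `I^μ_{a+}`. -/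
noncomputable def fracIntL (a μ : ℝ) (f : ℝ → ℝ) (x : ℝ) : ℝ :=
  (1 / Real.Gamma μ) * ∫ t in Set.Ioo a x, f t * (x - t) ^ (μ - 1)

/-- The right-sided Riemann–Liouville fractional derivative `D^μ_{b-}`. -/
noncomputable def fracDerR (b μ : ℝ) (f : ℝ → ℝ) (x : ℝ) : ℝ :=
  - deriv (fun y : ℝ => fracIntR b (1 - μ) f y) x

/-- Jacobi coefficients `f_n` of a function `f`. -/
noncomputable def jacobiCoef (a b β γ : ℝ) (f : ℝ → ℝ) (n : ℕ) : ℝ :=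
  ∫ x in Set.Ioo a b, f x * jacobiP a b β γ n x * ((x - a) ^ β * (b - x) ^ γ)

/-- Partial sums `S_k f` of the Jacobi series of `f`. -/
noncomputable def jacobiPartial (a b β γ : ℝ) (f : ℝ → ℝ) (k : ℕ) (x : ℝ) : ℝ :=
  ∑ n ∈ Finset.range (k + 1), jacobiCoef a b β γ f n * jacobiP a b β γ n x

open Asymptotics

/-!
The Jacobi equation makes the energy `Λ * Q ^ 2 + (x - a) * (b - x) * Q' ^ 2` monotone from any
point of `(a, b)` towards one of the endpoints when `max β γ ≥ -1/2`. Hence `|p_n|` is bounded by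
its endpoint values, which Gamma asymptotics show to be `O(n ^ (max β γ + 1/2))`.

The rest holds for any orthonormal system with such a bound. If `G k` is the resulting bound for
the `k`-th partial sum `S k`, then `|S N| ^ q` is pointwise at most a constant times the sum of
`(S N - S k) ^ 2`, weighted by the increments of `G ^ (q - 2)`. Integrating by orthonormality
leaves `∑ G n ^ (q - 2) * c n ^ 2`, which Hardy's inequality compares with `Ω_q(c) ^ q`. The
estimate applies to all finite subsums, so the series is Cauchy in the complete space `L_q`.
-/

/-! ### A weighted discrete Hardy inequality -/

/-- The increments of a sequence `W` under the convention `W (-1) = 0`, so that they sum to `W`. -/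
def increment (W : ℕ → ℝ) : ℕ → ℝ
  | 0 => W 0
  | k + 1 => W (k + 1) - W k

theorem sum_range_succ_increment (W : ℕ → ℝ) (n : ℕ) :
    ∑ k ∈ Finset.range (n + 1), increment W k = W n := by
  induction n with
  | zero => simp [increment]
  | succ n ih => rw [Finset.sum_range_succ, ih]; simp [increment]

theorem increment_nonneg {W : ℕ → ℝ} (h0 : 0 ≤ W 0) (hW : Monotone W) : ∀ k, 0 ≤ increment W k
  | 0 => h0
  | k + 1 => sub_nonneg.2 (hW k.le_succ)

theorem sum_range_sum_Ico_increment_mul (W v : ℕ → ℝ) (N : ℕ) :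
    ∑ k ∈ Finset.range N, increment W k * ∑ n ∈ Finset.Ico k N, v n =
      ∑ n ∈ Finset.range N, W n * v n := by
  simp_rw [Finset.mul_sum, Finset.range_eq_Ico, Finset.sum_Ico_Ico_comm, ← Finset.sum_mul,
    ← Finset.range_eq_Ico, sum_range_succ_increment]

theorem one_add_mul_sub_one_le_rpow {x p : ℝ} (hx : 0 < x) (hp : p ≤ 0) :
    1 + p * (x - 1) ≤ x ^ p := by
  have hlog : p * (x - 1) ≤ log x * p := by nlinarith [log_le_sub_one_of_pos hx]
  rw [rpow_def_of_pos hx]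
  linarith [add_one_le_exp (log x * p)]

theorem rpow_neg_le_rpow_sub_rpow {s y : ℝ} (hs : 1 < s) (hy : 1 ≤ y) :
    y ^ (-s) ≤ 2 ^ s / (s - 1) * (y ^ (1 - s) - (y + 1) ^ (1 - s)) := by
  have hy0 : 0 < y := by linarith
  have hs0 : 0 < s - 1 := by linarith
  have hdouble : y ^ (-s) ≤ 2 ^ s * (y + 1) ^ (-s) := by
    calc y ^ (-s) = 2 ^ s * (2 * y) ^ (-s) := by
          rw [mul_rpow zero_le_two hy0.le, ← mul_assoc, ← rpow_add two_pos, add_neg_cancel,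
            rpow_zero, one_mul]
      _ ≤ 2 ^ s * (y + 1) ^ (-s) := by
          gcongr 2 ^ s * ?_
          exact rpow_le_rpow_of_nonpos (by positivity) (by linarith) (by linarith)
  have htangent : (s - 1) * (y + 1) ^ (-s) ≤ y ^ (1 - s) - (y + 1) ^ (1 - s) := by
    have hbernoulli := one_add_mul_sub_one_le_rpow (x := y / (y + 1)) (p := 1 - s)
      (by positivity) (by linarith)
    rw [div_rpow hy0.le (by positivity), le_div_iff₀ (by positivity)] at hbernoulli
    have hpow : (y + 1) ^ (1 - s) = (y + 1) * (y + 1) ^ (-s) := by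
      rw [sub_eq_add_neg, rpow_add (by positivity), rpow_one]
    rw [hpow] at hbernoulli ⊢
    field_simp at hbernoulli
    linarith
  calc y ^ (-s) ≤ 2 ^ s / (s - 1) * ((s - 1) * (y + 1) ^ (-s)) := by
        rwa [div_mul_eq_mul_div, mul_left_comm, mul_div_cancel_left₀ _ hs0.ne']
    _ ≤ _ := by gcongr

theorem sum_Ico_rpow_neg_le {s : ℝ} (hs : 1 < s) (k N : ℕ) :
    ∑ n ∈ Finset.Ico k N, ((n : ℝ) + 1) ^ (-s) ≤ 2 ^ s / (s - 1) * ((k : ℝ) + 1) ^ (1 - s) := by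
  have : 0 < s - 1 := by linarith
  rcases le_total N k with hNk | hkN
  · rw [Finset.Ico_eq_empty_of_le hNk, Finset.sum_empty]
    positivity
  suffices ∑ n ∈ Finset.Ico k N, ((n : ℝ) + 1) ^ (-s) ≤
      2 ^ s / (s - 1) * (((k : ℝ) + 1) ^ (1 - s) - ((N : ℝ) + 1) ^ (1 - s)) from
    this.trans (by gcongr; exact sub_le_self _ (by positivity))
  induction N, hkN using Nat.le_induction with
  | base => simp
  | succ N hN ih =>
    rw [Finset.sum_Ico_succ_top hN]
    have hstep := rpow_neg_le_rpow_sub_rpow hs (le_add_of_nonneg_left N.cast_nonneg)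
    push_cast
    linarith

theorem rpow_sub_rpow_le {q x y : ℝ} (hq : 1 ≤ q) (hx : 0 ≤ x) (hxy : x ≤ y) :
    y ^ q - x ^ q ≤ q * (y - x) * y ^ (q - 1) := by
  rcases (hx.trans hxy).eq_or_lt with rfl | hy
  · simp [le_antisymm hxy hx]
  have hbernoulli := one_add_mul_self_le_rpow_one_add (s := x / y - 1) (p := q)
    (by linarith [div_nonneg hx hy.le]) hq
  rw [add_sub_cancel, div_rpow hx hy.le, le_div_iff₀ (by positivity)] at hbernoulli
  rw [rpow_sub_one hy.ne']
  field_simp at hbernoulli ⊢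
  linarith

theorem increment_rpow_sum_le {q : ℝ} (hq : 1 ≤ q) {x : ℕ → ℝ} (hx : ∀ k, 0 ≤ x k) (k : ℕ) :
    increment (fun n => (∑ i ∈ Finset.range (n + 1), x i) ^ q) k ≤
      q * x k * (∑ i ∈ Finset.range (k + 1), x i) ^ (q - 1) := by
  cases k with
  | zero =>
    have h := rpow_sub_rpow_le hq le_rfl (hx 0)
    simpa [increment, zero_rpow (by linarith : q ≠ 0)] using h
  | succ k =>
    have h := rpow_sub_rpow_le hq (Finset.sum_nonneg fun i _ => hx i)
      (Finset.sum_le_sum_of_subset_of_nonneg (Finset.range_subset_range.2 (k + 1).le_succ)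
        fun i _ _ => hx i)
    simpa only [increment, Finset.sum_range_succ _ (k + 1), add_sub_cancel_left] using h

theorem le_rpow_mul_of_le_mul_rpow {q D R T : ℝ} (hq : 1 < q) (hD : 0 ≤ D) (hR : 0 ≤ R)
    (hT : 0 ≤ T) (h : T ≤ D * (R ^ (1 / q) * T ^ (1 - 1 / q))) : T ≤ D ^ q * R := by
  have hq0 : 0 < q := by linarith
  rcases hT.eq_or_lt with rfl | hT
  · positivity
  have hroot : T ^ (1 / q) ≤ D * R ^ (1 / q) := by
    rw [rpow_sub hT, rpow_one, ← mul_assoc, mul_div_assoc', le_div_iff₀ (by positivity),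
      mul_comm] at h
    exact le_of_mul_le_mul_right h hT
  calc T = (T ^ (1 / q)) ^ q := by rw [← rpow_mul hT.le, one_div_mul_cancel hq0.ne', rpow_one]
    _ ≤ (D * R ^ (1 / q)) ^ q := by gcongr
    _ = D ^ q * R := by
        rw [mul_rpow hD (by positivity), ← rpow_mul hR, one_div_mul_cancel hq0.ne', rpow_one]

theorem sum_weighted_le_rpow_mul_rpow {q : ℝ} (hq : 1 < q) (s : ℝ) {x S : ℕ → ℝ}
    (hx : ∀ k, 0 ≤ x k) (hS : ∀ k, 0 ≤ S k) (N : ℕ) :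
    ∑ k ∈ Finset.range N, x k * S k ^ (q - 1) * ((k : ℝ) + 1) ^ (1 - s) ≤
      (∑ k ∈ Finset.range N, x k ^ q * ((k : ℝ) + 1) ^ (q - s)) ^ (1 / q) *
        (∑ k ∈ Finset.range N, S k ^ q * ((k : ℝ) + 1) ^ (-s)) ^ (1 - 1 / q) := by
  have : 0 < q := by linarith
  have hq1 : 0 < q - 1 := by linarith
  have hconj : q.HolderConjugate (q / (q - 1)) := HolderConjugate.conjExponent hq
  have hholder := inner_le_Lp_mul_Lq_of_nonneg (Finset.range N) hconj
    (f := fun k => x k * ((k : ℝ) + 1) ^ (1 - s / q))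
    (g := fun k => S k ^ (q - 1) * ((k : ℝ) + 1) ^ (s / q - s))
    (fun k _ => mul_nonneg (hx k) (by positivity))
    (fun k _ => mul_nonneg (rpow_nonneg (hS k) _) (by positivity))
  convert hholder using 1
  · refine Finset.sum_congr rfl fun k _ => ?_
    have hpow : ((k : ℝ) + 1) ^ (1 - s) =
        ((k : ℝ) + 1) ^ (1 - s / q) * ((k : ℝ) + 1) ^ (s / q - s) := by
      rw [← rpow_add (by positivity)]; ring_nf
    rw [hpow]; ring
  · congr 2
    · refine Finset.sum_congr rfl fun k _ => ?_
      rw [mul_rpow (hx k) (by positivity), ← rpow_mul (by positivity)]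
      congr 2; field_simp
    · refine Finset.sum_congr rfl fun k _ => ?_
      rw [mul_rpow (rpow_nonneg (hS k) _) (by positivity), ← rpow_mul (hS k),
        ← rpow_mul (by positivity)]
      congr 2 <;> field_simp
      ring
    · field_simp

-- Elliott's proof: summation by parts bounds the left side `T` by a multiple of
-- `R ^ (1 / q) * T ^ (1 - 1 / q)`, where `R` is the sum on the right.
theorem discrete_hardy {q s : ℝ} (hq : 1 < q) (hs : 1 < s) {x : ℕ → ℝ} (hx : ∀ k, 0 ≤ x k)
    (N : ℕ) :
    ∑ n ∈ Finset.range N, (∑ k ∈ Finset.range (n + 1), x k) ^ q * ((n : ℝ) + 1) ^ (-s) ≤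
      (2 ^ s / (s - 1) * q) ^ q *
        ∑ k ∈ Finset.range N, x k ^ q * ((k : ℝ) + 1) ^ (q - s) := by
  have : 0 < s - 1 := by linarith
  set S : ℕ → ℝ := fun n => ∑ k ∈ Finset.range (n + 1), x k
  have hS : ∀ n, 0 ≤ S n := fun n => Finset.sum_nonneg fun k _ => hx k
  have hSmono : Monotone fun n => S n ^ q := fun m n hmn =>
    rpow_le_rpow (hS m) (Finset.sum_le_sum_of_subset_of_nonneg
      (Finset.range_subset_range.2 (by lia)) fun k _ _ => hx k) (by linarith)
  refine le_rpow_mul_of_le_mul_rpow hq (by positivity)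
    (Finset.sum_nonneg fun k _ => mul_nonneg (rpow_nonneg (hx k) _) (by positivity))
    (Finset.sum_nonneg fun k _ => mul_nonneg (rpow_nonneg (hS k) _) (by positivity)) ?_
  calc ∑ n ∈ Finset.range N, S n ^ q * ((n : ℝ) + 1) ^ (-s)
      = ∑ k ∈ Finset.range N, increment (fun n => S n ^ q) k *
          ∑ n ∈ Finset.Ico k N, ((n : ℝ) + 1) ^ (-s) :=
        (sum_range_sum_Ico_increment_mul _ _ N).symm
    _ ≤ ∑ k ∈ Finset.range N, q * x k * S k ^ (q - 1) *
          (2 ^ s / (s - 1) * ((k : ℝ) + 1) ^ (1 - s)) := by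
        refine Finset.sum_le_sum fun k _ => mul_le_mul (increment_rpow_sum_le hq.le hx k)
          (sum_Ico_rpow_neg_le hs k N) (by positivity) ?_
        exact (increment_nonneg (rpow_nonneg (hS 0) q) hSmono k).trans
          (increment_rpow_sum_le hq.le hx k)
    _ = 2 ^ s / (s - 1) * q *
          ∑ k ∈ Finset.range N, x k * S k ^ (q - 1) * ((k : ℝ) + 1) ^ (1 - s) := by
        rw [Finset.mul_sum]
        exact Finset.sum_congr rfl fun k _ => by ring
    _ ≤ _ := by
        gcongr
        exact sum_weighted_le_rpow_mul_rpow hq s hx hS N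

theorem rpow_mul_rpow_le_add {x y u v : ℝ} (hx : 0 ≤ x) (hy : 0 ≤ y) (hu : 0 ≤ u) (hv : 0 ≤ v) :
    x ^ u * y ^ v ≤ x ^ (u + v) + y ^ (u + v) := by
  rcases le_total x y with hxy | hyx
  · calc x ^ u * y ^ v ≤ y ^ u * y ^ v := by gcongr
      _ = y ^ (u + v) := (rpow_add_of_nonneg hy hu hv).symm
      _ ≤ _ := le_add_of_nonneg_left (by positivity)
  · calc x ^ u * y ^ v ≤ x ^ u * x ^ v := by gcongr
      _ = x ^ (u + v) := (rpow_add_of_nonneg hx hu hv).symm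
      _ ≤ _ := le_add_of_nonneg_right (by positivity)

theorem sq_mul_rpow_le_weighted_add {q : ℝ} (hq : 2 ≤ q) (σ t : ℝ) {w G : ℝ} (hw : 0 < w)
    (hG : 0 ≤ G) :
    t ^ 2 * G ^ (q - 2) ≤ |t| ^ q * w ^ (σ * (q - 2)) + G ^ q * w ^ (-(2 * σ)) := by
  have hq0 : 0 < q := by linarith
  have h := rpow_mul_rpow_le_add (x := |t| * w ^ (σ * (q - 2) / q)) (y := G * w ^ (-(2 * σ) / q))
    (u := 2) (v := q - 2) (by positivity) (by positivity) zero_le_two (by linarith)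
  rw [add_sub_cancel, mul_rpow (abs_nonneg t) (by positivity), mul_rpow hG (by positivity),
    mul_rpow (abs_nonneg t) (by positivity), mul_rpow hG (by positivity), ← rpow_mul hw.le,
    ← rpow_mul hw.le, ← rpow_mul hw.le, ← rpow_mul hw.le, div_mul_cancel₀ _ hq0.ne',
    div_mul_cancel₀ _ hq0.ne', mul_mul_mul_comm, ← rpow_add hw, rpow_two, sq_abs] at h
  have hexp : σ * (q - 2) / q * 2 + -(2 * σ) / q * (q - 2) = 0 := by ring
  rwa [hexp, rpow_zero, mul_one] at h

theorem exists_sum_sq_mul_rpow_sum_le {q M K : ℝ} (hq : 2 ≤ q) (hM : -(1 / 2) < M) (hK : 0 ≤ K) :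
    ∃ A : ℝ, 0 < A ∧ ∀ (c : ℕ → ℝ) (N : ℕ),
      ∑ n ∈ Finset.range N, c n ^ 2 *
        (∑ k ∈ Finset.range (n + 1), |c k| * (K * ((k : ℝ) + 1) ^ M)) ^ (q - 2) ≤
      A * ∑ n ∈ Finset.range N, |c n| ^ q * ((n : ℝ) + 1) ^ ((M + 1) * (q - 2)) := by
  set H := (2 ^ (2 * (M + 1)) / (2 * (M + 1) - 1) * q) ^ q
  have hM0 : 0 < 2 * (M + 1) - 1 := by linarith
  refine ⟨1 + H * K ^ q, by positivity, fun c N => ?_⟩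
  set x : ℕ → ℝ := fun k => |c k| * (K * ((k : ℝ) + 1) ^ M)
  have hx : ∀ k, 0 ≤ x k := fun k => by positivity
  have hrhs : ∀ k : ℕ, x k ^ q * ((k : ℝ) + 1) ^ (q - 2 * (M + 1)) =
      K ^ q * (|c k| ^ q * ((k : ℝ) + 1) ^ ((M + 1) * (q - 2))) := fun k => by
    have hpow : ((k : ℝ) + 1) ^ ((M + 1) * (q - 2)) =
        ((k : ℝ) + 1) ^ (M * q) * ((k : ℝ) + 1) ^ (q - 2 * (M + 1)) := by
      rw [← rpow_add (by positivity)]; ring_nf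
    rw [mul_rpow (abs_nonneg _) (by positivity), mul_rpow hK (by positivity),
      ← rpow_mul (by positivity), hpow]
    ring
  have hhardy := discrete_hardy (by linarith : 1 < q) (by linarith : 1 < 2 * (M + 1)) hx N
  simp_rw [hrhs, ← Finset.mul_sum] at hhardy
  calc _ ≤ ∑ n ∈ Finset.range N, (|c n| ^ q * ((n : ℝ) + 1) ^ ((M + 1) * (q - 2)) +
          (∑ k ∈ Finset.range (n + 1), x k) ^ q * ((n : ℝ) + 1) ^ (-(2 * (M + 1)))) :=
        Finset.sum_le_sum fun n _ => sq_mul_rpow_le_weighted_add hq (M + 1) (c n)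
          (by positivity) (Finset.sum_nonneg fun k _ => hx k)
    _ ≤ _ := by
        rw [Finset.sum_add_distrib]
        linarith

/-! ### Series in bounded orthonormal systems -/

theorem exists_abs_le_two_mul_of_abs_le {S G : ℕ → ℝ} (hS0 : S 0 = 0)
    (hSG : ∀ k, |S (k + 1)| ≤ G k) {N : ℕ} (hN : N ≠ 0) :
    ∃ m < N, |S N| ≤ 2 * G m ∧ ∀ k ≤ m, |S N| ≤ 2 * |S N - S k| := by
  classical
  obtain ⟨N, rfl⟩ := Nat.exists_eq_succ_of_ne_zero hN
  have hlast : |S (N + 1)| ≤ 2 * G N := by linarith [hSG N, abs_nonneg (S (N + 1))]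
  have hex : ∃ m, |S (N + 1)| ≤ 2 * G m := ⟨N, hlast⟩
  refine ⟨Nat.find hex, Nat.lt_succ_of_le (Nat.find_min' hex hlast), Nat.find_spec hex,
    fun k hk => ?_⟩
  have hhalf : 2 * |S k| ≤ |S (N + 1)| := by
    cases k with
    | zero => simp [hS0]
    | succ k => linarith [hSG k, Nat.find_min hex (m := k) hk]
  linarith [abs_sub_abs_le_abs_sub (S (N + 1)) (S k)]

-- Only the increments up to the first `m` with `|S N| ≤ 2 * G m` matter: they sum to
-- `G m ^ (q - 2)`, and up to `m` the remainder `S N - S k` still carries half of `S N`.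
theorem abs_rpow_le_sum_increment_mul_sq {q : ℝ} (hq : 2 ≤ q) {S G : ℕ → ℝ} (hG : Monotone G)
    (hS0 : S 0 = 0) (hSG : ∀ k, |S (k + 1)| ≤ G k) (N : ℕ) :
    |S N| ^ q ≤
      2 ^ q * ∑ k ∈ Finset.range N, increment (fun n => G n ^ (q - 2)) k * (S N - S k) ^ 2 := by
  rcases eq_or_ne N 0 with rfl | hN
  · simp [hS0, zero_rpow (by linarith : q ≠ 0)]
  have hG0 : ∀ k, 0 ≤ G k := fun k => (abs_nonneg _).trans (hSG k)
  have hinc := increment_nonneg (W := fun n => G n ^ (q - 2)) (rpow_nonneg (hG0 0) _)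
    fun m n hmn => rpow_le_rpow (hG0 m) (hG hmn) (by linarith)
  obtain ⟨m, hmN, hSm, hrem⟩ := exists_abs_le_two_mul_of_abs_le hS0 hSG hN
  calc |S N| ^ q = 2 ^ q * ((|S N| / 2) ^ (q - 2) * (|S N| / 2) ^ 2) := by
        rw [← rpow_two, ← rpow_add_of_nonneg (by positivity) (by linarith) zero_le_two,
          sub_add_cancel, ← mul_rpow zero_le_two (by positivity), mul_div_cancel₀ _ two_ne_zero]
    _ ≤ 2 ^ q * (G m ^ (q - 2) * (|S N| / 2) ^ 2) := by
        gcongr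
        linarith
    _ = 2 ^ q * ∑ k ∈ Finset.range (m + 1),
          increment (fun n => G n ^ (q - 2)) k * (|S N| / 2) ^ 2 := by
        rw [← Finset.sum_mul, sum_range_succ_increment]
    _ ≤ 2 ^ q * ∑ k ∈ Finset.range (m + 1),
          increment (fun n => G n ^ (q - 2)) k * (S N - S k) ^ 2 := by
        gcongr 2 ^ q * ?_
        refine Finset.sum_le_sum fun k hk => mul_le_mul_of_nonneg_left ?_ (hinc k)
        rw [← sq_abs (S N - S k)]
        gcongr
        linarith [hrem k (Finset.mem_range_succ_iff.1 hk)]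
    _ ≤ _ := by
        gcongr 2 ^ q * ?_
        exact Finset.sum_le_sum_of_subset_of_nonneg (Finset.range_subset_range.2 hmN)
          fun k _ _ => mul_nonneg (hinc k) (sq_nonneg _)

section OrthonormalSystem

variable {X : Type*} [MeasurableSpace X] {μ : Measure X}

theorem memLp_two_of_integral_mul_self_ne_zero {g : X → ℝ} (hg : AEStronglyMeasurable g μ)
    (h : ∫ x, g x * g x ∂μ ≠ 0) : MemLp g 2 μ := by
  rw [memLp_two_iff_integrable_sq hg]
  exact (Integrable.of_integral_ne_zero h).congr (.of_forall fun x => (sq (g x)).symm)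

theorem integral_sq_sum_of_orthonormal {ι : Type*} [DecidableEq ι] {φ : ι → X → ℝ}
    (hφ : ∀ n, MemLp (φ n) 2 μ) (horth : ∀ m n, ∫ x, φ m x * φ n x ∂μ = if m = n then 1 else 0)
    (c : ι → ℝ) (s : Finset ι) :
    ∫ x, (∑ n ∈ s, c n * φ n x) ^ 2 ∂μ = ∑ n ∈ s, c n ^ 2 := by
  have hint : ∀ i j, Integrable (fun x => c i * φ i x * (c j * φ j x)) μ := fun i j =>
    ((hφ i).const_mul (c i)).integrable_mul ((hφ j).const_mul (c j))
  simp_rw [sq, Finset.sum_mul_sum]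
  rw [integral_finsetSum _ fun i _ => integrable_finsetSum _ fun j _ => hint i j]
  refine Finset.sum_congr rfl fun i hi => ?_
  have hij : ∀ j, ∫ x, c i * φ i x * (c j * φ j x) ∂μ = c i * c j * if i = j then 1 else 0 :=
    fun j => by simp_rw [← horth, ← integral_const_mul, mul_mul_mul_comm (c i) (φ i _)]
  rw [integral_finsetSum _ fun j _ => hint i j]
  simp [hij, hi]

theorem memLp_ofReal_of_memLp_two_of_abs_le {q : ℝ} (hq : 2 ≤ q) {g : X → ℝ} (hg : MemLp g 2 μ)
    {B : ℝ} (hB : ∀ᵐ x ∂μ, |g x| ≤ B) : MemLp g (ENNReal.ofReal q) μ := by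
  have hq0 : 0 < q := by linarith
  rw [← integrable_norm_rpow_iff hg.1 (by simpa using hq0) ENNReal.ofReal_ne_top,
    ENNReal.toReal_ofReal hq0.le]
  refine (hg.integrable_sq.const_mul (B ^ (q - 2))).mono'
    (hg.1.norm.aemeasurable.pow_const q).aestronglyMeasurable ?_
  filter_upwards [hB] with x hx
  rw [norm_of_nonneg (by positivity), norm_eq_abs]
  calc |g x| ^ q = |g x| ^ (q - 2) * g x ^ 2 := by
        rw [← sq_abs, ← rpow_two, ← rpow_add_of_nonneg (abs_nonneg _) (by linarith) zero_le_two,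
          sub_add_cancel]
    _ ≤ B ^ (q - 2) * g x ^ 2 := by gcongr

theorem integral_abs_sum_rpow_le_of_abs_le {q : ℝ} (hq : 2 ≤ q) {φ : ℕ → X → ℝ}
    (hφ : ∀ n, MemLp (φ n) 2 μ) (horth : ∀ m n, ∫ x, φ m x * φ n x ∂μ = if m = n then 1 else 0)
    {B : ℕ → ℝ} (hB : ∀ n, ∀ᵐ x ∂μ, |φ n x| ≤ B n) (hB0 : ∀ n, 0 ≤ B n) (c : ℕ → ℝ) (N : ℕ) :
    ∫ x, |∑ n ∈ Finset.range N, c n * φ n x| ^ q ∂μ ≤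
      2 ^ q * ∑ n ∈ Finset.range N,
        c n ^ 2 * (∑ k ∈ Finset.range (n + 1), |c k| * B k) ^ (q - 2) := by
  set G : ℕ → ℝ := fun n => ∑ k ∈ Finset.range (n + 1), |c k| * B k
  have hG : Monotone G := fun m n hmn => Finset.sum_le_sum_of_subset_of_nonneg
    (Finset.range_subset_range.2 (by lia)) fun k _ _ => mul_nonneg (abs_nonneg _) (hB0 k)
  have hpointwise : ∀ᵐ x ∂μ, |∑ n ∈ Finset.range N, c n * φ n x| ^ q ≤
      2 ^ q * ∑ k ∈ Finset.range N, increment (fun n => G n ^ (q - 2)) k *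
        (∑ n ∈ Finset.Ico k N, c n * φ n x) ^ 2 := by
    filter_upwards [ae_all_iff.2 hB] with x hx
    refine (abs_rpow_le_sum_increment_mul_sq hq (S := fun k => ∑ n ∈ Finset.range k, c n * φ n x)
      hG (Finset.sum_range_zero _) (fun k => ?_) N).trans_eq ?_
    · refine (Finset.abs_sum_le_sum_abs _ _).trans (Finset.sum_le_sum fun i _ => ?_)
      rw [abs_mul]
      exact mul_le_mul_of_nonneg_left (hx i) (abs_nonneg _)
    · congr! 4 with k hk
      rw [Finset.sum_Ico_eq_sub _ (Finset.mem_range.1 hk).le]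
  have hint : ∀ k, Integrable (fun x => increment (fun n => G n ^ (q - 2)) k *
      (∑ n ∈ Finset.Ico k N, c n * φ n x) ^ 2) μ := fun k =>
    (memLp_finsetSum _ fun n _ => (hφ n).const_mul (c n)).integrable_sq.const_mul _
  calc _ ≤ ∫ x, 2 ^ q * ∑ k ∈ Finset.range N, increment (fun n => G n ^ (q - 2)) k *
          (∑ n ∈ Finset.Ico k N, c n * φ n x) ^ 2 ∂μ :=
        integral_mono_of_nonneg (.of_forall fun x => by positivity)
          ((integrable_finsetSum _ fun k _ => hint k).const_mul _) hpointwise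
    _ = 2 ^ q * ∑ n ∈ Finset.range N, G n ^ (q - 2) * c n ^ 2 := by
        rw [integral_const_mul, integral_finsetSum _ fun k _ => hint k]
        simp_rw [integral_const_mul, integral_sq_sum_of_orthonormal hφ horth,
          sum_range_sum_Ico_increment_mul]
    _ = _ := by simp_rw [mul_comm (G _ ^ (q - 2))]; rfl

theorem exists_lpNorm_sum_le {K M q : ℝ} (hK : 0 ≤ K) (hM : -(1 / 2) < M) (hq : 2 ≤ q)
    {φ : ℕ → X → ℝ} (hφ : ∀ n, MemLp (φ n) 2 μ)
    (horth : ∀ m n, ∫ x, φ m x * φ n x ∂μ = if m = n then 1 else 0)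
    (hbound : ∀ n, ∀ᵐ x ∂μ, |φ n x| ≤ K * ((n : ℝ) + 1) ^ M) :
    ∃ C : ℝ, 0 < C ∧ ∀ (c : ℕ → ℝ) (s : Finset ℕ),
      lpNorm (fun x => ∑ n ∈ s, c n * φ n x) (ENNReal.ofReal q) μ ≤
        C * (∑ n ∈ s, |c n| ^ q * ((n : ℝ) + 1) ^ ((M + 1) * (q - 2))) ^ (1 / q) := by
  have hq0 : 0 < q := by linarith
  obtain ⟨A, hA, hsum⟩ := exists_sum_sq_mul_rpow_sum_le hq hM hK
  refine ⟨(2 ^ q * A) ^ (1 / q), by positivity, fun c s => ?_⟩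
  obtain ⟨N, hN⟩ := s.exists_nat_subset_range
  set d : ℕ → ℝ := fun n => if n ∈ s then c n else 0 with hd
  have hcd : ∀ F : ℕ → ℝ → ℝ, (∀ n, F n 0 = 0) →
      ∑ n ∈ Finset.range N, F n (d n) = ∑ n ∈ s, F n (c n) := fun F hF => by
    rw [← Finset.sum_subset hN fun n _ hn => by rw [hd]; simp only [if_neg hn, hF]]
    exact Finset.sum_congr rfl fun n hn => by rw [hd]; simp only [if_pos hn]
  have hmeas : AEStronglyMeasurable (fun x => ∑ n ∈ s, c n * φ n x) μ :=
    (memLp_finsetSum s fun n _ => (hφ n).const_mul (c n)).1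
  rw [lpNorm_eq_integral_norm_rpow_toReal (by simpa using hq0) ENNReal.ofReal_ne_top hmeas,
    ENNReal.toReal_ofReal hq0.le, ← one_div,
    ← mul_rpow (by positivity) (Finset.sum_nonneg fun n _ => by positivity)]
  gcongr
  calc ∫ x, |∑ n ∈ s, c n * φ n x| ^ q ∂μ
      = ∫ x, |∑ n ∈ Finset.range N, d n * φ n x| ^ q ∂μ := by
        congr! 4 with x
        exact (hcd (fun n t => t * φ n x) fun n => zero_mul _).symm
    _ ≤ 2 ^ q * (A * ∑ n ∈ Finset.range N, |d n| ^ q * ((n : ℝ) + 1) ^ ((M + 1) * (q - 2))) :=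
        (integral_abs_sum_rpow_le_of_abs_le hq hφ horth hbound
          (fun n => by positivity) d N).trans (by gcongr; exact hsum d N)
    _ = _ := by
        rw [hcd (fun n t => |t| ^ q * ((n : ℝ) + 1) ^ ((M + 1) * (q - 2)))
          fun n => by simp [hq0.ne'], mul_assoc]

end OrthonormalSystem

theorem summable_of_norm_sum_le_rpow {ι E : Type*} [NormedAddCommGroup E] [CompleteSpace E]
    {u : ι → E} {w : ι → ℝ} {C r : ℝ} (hw : ∀ n, 0 ≤ w n) (hsum : Summable w) (hC : 0 < C)
    (hr : 0 < r) (hle : ∀ s : Finset ι, ‖∑ n ∈ s, u n‖ ≤ C * (∑ n ∈ s, w n) ^ r) :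
    Summable u := by
  rw [summable_iff_vanishing_norm] at hsum ⊢
  intro ε hε
  obtain ⟨s, hs⟩ := hsum ((ε / C) ^ (1 / r)) (by positivity)
  refine ⟨s, fun t hts => (hle t).trans_lt ?_⟩
  have hwt : 0 ≤ ∑ n ∈ t, w n := Finset.sum_nonneg fun n _ => hw n
  have hlt := rpow_lt_rpow hwt (norm_of_nonneg hwt ▸ hs t hts) hr
  rwa [← rpow_mul (by positivity), one_div_mul_cancel hr.ne', rpow_one, lt_div_iff₀' hC] at hlt

theorem exists_tendsto_lpNorm_sum_sub {X E : Type*} [MeasurableSpace X] {μ : Measure X}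
    [NormedAddCommGroup E] [CompleteSpace E] {p : ENNReal} (hp : 1 ≤ p) {g : ℕ → X → E}
    (hg : ∀ n, MemLp (g n) p μ) {w : ℕ → ℝ} {C r : ℝ} (hw : ∀ n, 0 ≤ w n) (hsum : Summable w)
    (hC : 0 < C) (hr : 0 < r)
    (hle : ∀ s : Finset ℕ, lpNorm (fun x => ∑ n ∈ s, g n x) p μ ≤ C * (∑ n ∈ s, w n) ^ r) :
    ∃ f : X → E, MemLp f p μ ∧
      Tendsto (fun N => lpNorm (fun x => (∑ n ∈ Finset.range N, g n x) - f x) p μ) atTop (nhds 0) ∧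
      lpNorm f p μ ≤ C * (∑' n, w n) ^ r := by
  have : Fact (1 ≤ p) := ⟨hp⟩
  set u : ℕ → Lp E p μ := fun n => (hg n).toLp (g n)
  have hnorm : ∀ {F : Lp E p μ} {h : X → E}, F =ᵐ[μ] h → ‖F‖ = lpNorm h p μ := fun hFh => by
    rw [Lp.norm_def, eLpNorm_congr_ae hFh,
      toReal_eLpNorm ((Lp.aestronglyMeasurable _).congr hFh)]
  have hcoe : ∀ s : Finset ℕ, ⇑(∑ n ∈ s, u n) =ᵐ[μ] fun x => ∑ n ∈ s, g n x := fun s => by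
    filter_upwards [Lp.coeFn_finsetSum s u, ae_all_iff.2 fun n => (hg n).coeFn_toLp] with x hx hgx
    simp only [hx, Finset.sum_apply, u, hgx]
  have hule : ∀ s : Finset ℕ, ‖∑ n ∈ s, u n‖ ≤ C * (∑ n ∈ s, w n) ^ r := fun s => by
    rw [hnorm (hcoe s)]
    exact hle s
  obtain ⟨F, hF⟩ := summable_of_norm_sum_le_rpow hw hsum hC hr hule
  refine ⟨F, Lp.memLp F, ?_, ?_⟩
  · refine (tendsto_iff_norm_sub_tendsto_zero.1 hF.tendsto_sum_nat).congr fun N => ?_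
    exact hnorm ((Lp.coeFn_sub _ F).trans ((hcoe _).sub .rfl))
  · rw [← hnorm .rfl]
    refine le_of_tendsto hF.tendsto_sum_nat.norm (.of_forall fun N => (hule _).trans ?_)
    gcongr
    · exact Finset.sum_nonneg fun n _ => hw n
    · exact hsum.sum_le_tsum _ fun n _ => hw n

theorem exists_lpNorm_series_le_of_orthonormal {X : Type*} [MeasurableSpace X] {μ : Measure X}
    {K M q : ℝ} (hK : 0 ≤ K) (hM : -(1 / 2) < M) (hq : 2 ≤ q) {φ : ℕ → X → ℝ}
    (hφ : ∀ n, AEStronglyMeasurable (φ n) μ)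
    (horth : ∀ m n, ∫ x, φ m x * φ n x ∂μ = if m = n then 1 else 0)
    (hbound : ∀ n, ∀ᵐ x ∂μ, |φ n x| ≤ K * ((n : ℝ) + 1) ^ M) :
    ∃ C : ℝ, 0 < C ∧ ∀ c : ℕ → ℝ,
      Summable (fun n : ℕ => |c n| ^ q * ((n : ℝ) + 1) ^ ((M + 1) * (q - 2))) →
      ∃ f : X → ℝ, MemLp f (ENNReal.ofReal q) μ ∧
        Tendsto (fun N => lpNorm (fun x => (∑ n ∈ Finset.range N, c n * φ n x) - f x)
          (ENNReal.ofReal q) μ) atTop (nhds 0) ∧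
        lpNorm f (ENNReal.ofReal q) μ ≤
          C * (∑' n : ℕ, |c n| ^ q * ((n : ℝ) + 1) ^ ((M + 1) * (q - 2))) ^ (1 / q) := by
  have hφ2 : ∀ n, MemLp (φ n) 2 μ := fun n =>
    memLp_two_of_integral_mul_self_ne_zero (hφ n) (by simp [horth])
  obtain ⟨C, hC, hle⟩ := exists_lpNorm_sum_le hK hM hq hφ2 horth hbound
  refine ⟨C, hC, fun c hc => exists_tendsto_lpNorm_sum_sub ?_ (fun n => ?_)
    (fun n => by positivity) hc hC (by positivity) (hle c)⟩
  · exact ENNReal.one_le_ofReal.2 (by linarith)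
  · exact (memLp_ofReal_of_memLp_two_of_abs_le hq (hφ2 n) (hbound n)).const_mul (c n)

/-! ### Jacobi polynomials and the energy of the Jacobi equation -/

section RodriguesPoly

open Polynomial

variable {R : Type*} [CommRing R]

/-- The polynomial `Q` of Rodrigues' formula
`(d/dx) ^ n [(x - a) ^ (β + n) * (b - x) ^ (γ + n)] = (x - a) ^ β * (b - x) ^ γ * Q x`,
an unnormalized Jacobi polynomial. The recursion differentiates once, which leaves the formula
for `n` with parameters `β + 1` and `γ + 1`. -/
noncomputable def rodriguesPoly (a b : R) : ℕ → R → R → R[X]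
  | 0, _, _ => 1
  | n + 1, β, γ =>
    (C (β + 1) * (C b - X) - C (γ + 1) * (X - C a)) * rodriguesPoly a b n (β + 1) (γ + 1) +
      (X - C a) * (C b - X) * derivative (rodriguesPoly a b n (β + 1) (γ + 1))

theorem eval_rodriguesPoly_succ (a b : R) (n : ℕ) (β γ x : R) :
    (rodriguesPoly a b (n + 1) β γ).eval x =
      ((β + 1) * (b - x) - (γ + 1) * (x - a)) * (rodriguesPoly a b n (β + 1) (γ + 1)).eval x +
        (x - a) * (b - x) * (derivative (rodriguesPoly a b n (β + 1) (γ + 1))).eval x := by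
  simp [rodriguesPoly]

theorem derivative_rodriguesPoly_succ (a b : R) (n : ℕ) (β γ : R) :
    derivative (rodriguesPoly a b (n + 1) β γ) =
      C (-((n : R) + 1) * (n + β + γ + 2)) * rodriguesPoly a b n (β + 1) (γ + 1) := by
  induction n generalizing β γ with
  | zero => simp [rodriguesPoly, C_ofNat]; ring
  | succ n ih =>
    have hQ : rodriguesPoly a b (n + 1) (β + 1) (γ + 1) = _ := rodriguesPoly.eq_2 ..
    rw [rodriguesPoly]
    simp only [derivative_add, derivative_sub, derivative_mul, derivative_C, derivative_X, ih]
    push_cast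
    simp only [map_add, map_mul, map_neg, map_one, C_ofNat] at hQ ⊢
    linear_combination ((C (n : R) + 1) * (C (n : R) + (C β + 1) + (C γ + 1) + 2)) * hQ

theorem rodriguesPoly_succ_ode (a b : R) (n : ℕ) (β γ x : R) :
    (x - a) * (b - x) * (derivative (derivative (rodriguesPoly a b (n + 1) β γ))).eval x +
      ((β + 1) * (b - x) - (γ + 1) * (x - a)) *
        (derivative (rodriguesPoly a b (n + 1) β γ)).eval x =
      -(((n : R) + 1) * (n + β + γ + 2) * (rodriguesPoly a b (n + 1) β γ).eval x) := by
  rw [eval_rodriguesPoly_succ, derivative_rodriguesPoly_succ]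
  simp only [derivative_C_mul, eval_mul, eval_C]
  ring

theorem rodriguesPoly_swap (a b : R) (n : ℕ) (β γ : R) :
    rodriguesPoly b a n γ β = rodriguesPoly a b n β γ := by
  induction n generalizing β γ with
  | zero => rfl
  | succ n ih => rw [rodriguesPoly, rodriguesPoly, ih]; ring

theorem eval_left_rodriguesPoly (a b : R) (n : ℕ) (β γ : R) :
    (rodriguesPoly a b n β γ).eval a = (b - a) ^ n * (ascPochhammer R n).eval (β + 1) := by
  induction n generalizing β γ with
  | zero => simp [rodriguesPoly]
  | succ n ih =>
    rw [eval_rodriguesPoly_succ, ih, ascPochhammer_succ_left]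
    simp
    ring

theorem eval_right_rodriguesPoly (a b : R) (n : ℕ) (β γ : R) :
    (rodriguesPoly a b n β γ).eval b = (a - b) ^ n * (ascPochhammer R n).eval (γ + 1) := by
  rw [← rodriguesPoly_swap, eval_left_rodriguesPoly]

end RodriguesPoly

section Energy

open Polynomial

/-- The energy of a solution `Q` of the Jacobi equation
`(x - a) * (b - x) * Q'' + ((β + 1) * (b - x) - (γ + 1) * (x - a)) * Q' = -Λ * Q`.
It dominates `Λ * Q ^ 2` between the endpoints and equals it there. -/
noncomputable def jacobiEnergy (a b Λ : ℝ) (Q : ℝ[X]) (x : ℝ) : ℝ :=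
  Λ * Q.eval x ^ 2 + (x - a) * (b - x) * (derivative Q).eval x ^ 2

variable {a b β γ Λ : ℝ} {Q : ℝ[X]}

theorem hasDerivAt_jacobiEnergy {x : ℝ}
    (hode : (x - a) * (b - x) * (derivative (derivative Q)).eval x +
      ((β + 1) * (b - x) - (γ + 1) * (x - a)) * (derivative Q).eval x = -(Λ * Q.eval x)) :
    HasDerivAt (jacobiEnergy a b Λ Q)
      (((2 * γ + 1) * (x - a) - (2 * β + 1) * (b - x)) * (derivative Q).eval x ^ 2) x := by
  have hleft : HasDerivAt (fun x : ℝ => x - a) 1 x := (hasDerivAt_id x).sub_const a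
  have hright : HasDerivAt (fun x : ℝ => b - x) (-1) x := (hasDerivAt_id x).const_sub b
  refine ((((Q.hasDerivAt x).fun_pow 2).const_mul Λ).add ((hleft.fun_mul hright).fun_mul
    (((derivative Q).hasDerivAt x).fun_pow 2))).congr_deriv ?_
  push_cast
  linear_combination 2 * (derivative Q).eval x * hode

theorem abs_eval_le_of_jacobiEnergy_le (hΛ : 0 < Λ) {x y : ℝ} (hx : x ∈ Icc a b)
    (hy : (y - a) * (b - y) = 0) (h : jacobiEnergy a b Λ Q x ≤ jacobiEnergy a b Λ Q y) :
    |Q.eval x| ≤ |Q.eval y| := by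
  have hnonneg : 0 ≤ (x - a) * (b - x) * (derivative Q).eval x ^ 2 :=
    mul_nonneg (mul_nonneg (sub_nonneg.2 hx.1) (sub_nonneg.2 hx.2)) (sq_nonneg _)
  rw [jacobiEnergy, jacobiEnergy, hy, zero_mul, add_zero] at h
  exact sq_le_sq.1 (le_of_mul_le_mul_left (by linarith) hΛ)

theorem forall_nonpos_or_forall_nonneg_of_endpoint {w : ℝ → ℝ} (hw : Monotone w ∨ Antitone w)
    (hend : w a ≤ 0 ∨ 0 ≤ w b) (x : ℝ) :
    (∀ y ∈ Icc a x, w y ≤ 0) ∨ ∀ y ∈ Icc x b, 0 ≤ w y := by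
  rcases hw with hw | hw
  · rcases le_total (w x) 0 with hx | hx
    · exact .inl fun y hy => (hw hy.2).trans hx
    · exact .inr fun y hy => hx.trans (hw hy.1)
  · exact hend.imp (fun ha y hy => (hw hy.1).trans ha) fun hb y hy => hb.trans (hw hy.2)

theorem abs_eval_le_max_of_jacobi_ode (hmax : -1 / 2 ≤ max β γ) (hΛ : 0 < Λ)
    (hode : ∀ x, (x - a) * (b - x) * (derivative (derivative Q)).eval x +
      ((β + 1) * (b - x) - (γ + 1) * (x - a)) * (derivative Q).eval x = -(Λ * Q.eval x))
    {x : ℝ} (hx : x ∈ Icc a b) : |Q.eval x| ≤ max |Q.eval a| |Q.eval b| := by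
  set w : ℝ → ℝ := fun y => (2 * γ + 1) * (y - a) - (2 * β + 1) * (b - y) with hwdef
  have hw : Monotone w ∨ Antitone w := by
    rcases le_total 0 (β + γ + 1) with h | h
    · exact .inl fun y z hyz => by rw [hwdef]; nlinarith
    · exact .inr fun y z hyz => by rw [hwdef]; nlinarith
  have hend : w a ≤ 0 ∨ 0 ≤ w b := by
    have hab : 0 ≤ b - a := sub_nonneg.2 (hx.1.trans hx.2)
    refine (le_max_iff.1 hmax).imp (fun h => ?_) fun h => ?_ <;> simp only [hwdef, sub_self]
    · nlinarith
    · nlinarith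
  have hE : ∀ y, HasDerivAt (jacobiEnergy a b Λ Q) (w y * (derivative Q).eval y ^ 2) y :=
    fun y => hasDerivAt_jacobiEnergy (hode y)
  have hEcont : Continuous (jacobiEnergy a b Λ Q) :=
    continuous_iff_continuousAt.2 fun y => (hE y).continuousAt
  rcases forall_nonpos_or_forall_nonneg_of_endpoint hw hend x with hneg | hpos
  · have hanti : AntitoneOn (jacobiEnergy a b Λ Q) (Icc a x) :=
      antitoneOn_of_hasDerivWithinAt_nonpos (convex_Icc a x) hEcont.continuousOn
        (fun y _ => (hE y).hasDerivWithinAt) fun y hy =>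
          mul_nonpos_of_nonpos_of_nonneg (hneg y (interior_subset hy)) (sq_nonneg _)
    exact le_max_of_le_left (abs_eval_le_of_jacobiEnergy_le hΛ hx (by simp)
      (hanti (left_mem_Icc.2 hx.1) (right_mem_Icc.2 hx.1) hx.1))
  · have hmono : MonotoneOn (jacobiEnergy a b Λ Q) (Icc x b) :=
      monotoneOn_of_hasDerivWithinAt_nonneg (convex_Icc x b) hEcont.continuousOn
        (fun y _ => (hE y).hasDerivWithinAt) fun y hy =>
          mul_nonneg (hpos y (interior_subset hy)) (sq_nonneg _)
    exact le_max_of_le_right (abs_eval_le_of_jacobiEnergy_le hΛ hx (by simp)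
      (hmono (left_mem_Icc.2 hx.2) (right_mem_Icc.2 hx.2) hx.2))

end Energy

/-! ### Asymptotics of the Gamma function and of the normalizing factors -/

theorem gamma_add_natCast {s : ℝ} (hs : 0 < s) (n : ℕ) :
    Gamma (s + n) = (ascPochhammer ℝ n).eval s * Gamma s := by
  induction n with
  | zero => simp
  | succ n ih =>
    rw [Nat.cast_succ, ← add_assoc, Gamma_add_one (by positivity), ih, ascPochhammer_succ_eval]
    ring

theorem prod_range_add_natCast (s : ℝ) (n : ℕ) :
    ∏ j ∈ Finset.range n, (s + j) = (ascPochhammer ℝ n).eval s := by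
  induction n with
  | zero => simp
  | succ n ih => rw [Finset.prod_range_succ, ih, ascPochhammer_succ_eval]

theorem isEquivalent_natCast_add (t : ℝ) : (fun n : ℕ => t + n) ~[atTop] fun n : ℕ => (n : ℝ) := by
  have ht : (fun _ : ℕ => t) =o[atTop] fun n : ℕ => (n : ℝ) :=
    isLittleO_const_left.2 (.inr (tendsto_norm_atTop_atTop.comp tendsto_natCast_atTop_atTop))
  exact IsEquivalent.refl.add_isLittleO ht |>.congr_left (.of_forall fun n => add_comm _ _)

theorem gamma_natCast_add_isEquivalent_of_pos {t : ℝ} (ht : 0 < t) :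
    (fun n : ℕ => Gamma (t + n + 1)) ~[atTop] fun n : ℕ => (n : ℝ) ^ t * n.factorial := by
  refine (isEquivalent_of_tendsto_one ?_).symm
  have hlim := (GammaSeq_tendsto_Gamma t).div_const (Gamma t)
  rw [div_self (Gamma_pos_of_pos ht).ne'] at hlim
  refine hlim.congr fun n => ?_
  rw [Pi.div_apply, GammaSeq, prod_range_add_natCast, div_div, ← gamma_add_natCast ht,
    Nat.cast_succ, add_assoc]

theorem gamma_natCast_add_isEquivalent (t : ℝ) :
    (fun n : ℕ => Gamma (t + n + 1)) ~[atTop] fun n : ℕ => (n : ℝ) ^ t * n.factorial := by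
  obtain ⟨k, hk⟩ := exists_nat_gt (-t)
  induction k generalizing t with
  | zero => exact gamma_natCast_add_isEquivalent_of_pos (by simpa using hk)
  | succ k ih =>
    refine ((ih (t + 1) (by push_cast at hk; linarith)).div
      (isEquivalent_natCast_add (t + 1))).congr_left ?_ |>.congr_right ?_
    · have hlarge : ∀ᶠ n : ℕ in atTop, -(t + 1) < n :=
        tendsto_natCast_atTop_atTop.eventually_gt_atTop _
      filter_upwards [hlarge] with n hn
      have hne : t + n + 1 ≠ 0 := by linarith
      rw [Pi.div_apply, add_right_comm t, Gamma_add_one hne, mul_div_cancel_left₀ _ hne]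
    · filter_upwards [eventually_gt_atTop 0] with n hn
      rw [Pi.div_apply, rpow_add_one (by positivity)]
      field_simp

theorem jacobiDelta_swap (β γ : ℝ) (n : ℕ) : jacobiDelta γ β n = jacobiDelta β γ n := by
  rw [jacobiDelta, jacobiDelta, add_comm γ β, mul_right_comm (n.factorial : ℝ)]

theorem sq_jacobiDelta {β γ : ℝ} (hβ : -1 < β) (hγ : -1 < γ) {n : ℕ} (hn : 1 ≤ n) :
    jacobiDelta β γ n ^ 2 = (β + γ + 2 * n + 1) * Gamma (β + γ + n + 1) /
      (n.factorial * Gamma (β + n + 1) * Gamma (γ + n + 1)) := by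
  have hn' : (1 : ℝ) ≤ n := by exact_mod_cast hn
  have hβγ := Gamma_pos_of_pos (by linarith : 0 < β + γ + n + 1)
  have hβn := Gamma_pos_of_pos (by linarith : 0 < β + n + 1)
  have hγn := Gamma_pos_of_pos (by linarith : 0 < γ + n + 1)
  have hfactor : 0 < β + γ + 2 * n + 1 := by linarith
  rw [jacobiDelta, sq_sqrt (by positivity)]

theorem jacobiDelta_mul_gamma_isBigO {β γ : ℝ} (hβ : -1 < β) (hγ : -1 < γ) :
    (fun n : ℕ => jacobiDelta β γ n * Gamma (β + n + 1)) =O[atTop]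
      fun n : ℕ => (n : ℝ) ^ (β + 1 / 2) := by
  have hlinear : (fun n : ℕ => β + γ + 2 * n + 1) =O[atTop] fun n : ℕ => (n : ℝ) := by
    exact ((isEquivalent_natCast_add ((β + γ + 1) / 2)).isBigO.const_mul_left 2).congr_left
      fun n => by ring
  have hquot := ((hlinear.mul (gamma_natCast_add_isEquivalent (β + γ)).isBigO).mul
    (gamma_natCast_add_isEquivalent β).isBigO).mul
      (gamma_natCast_add_isEquivalent γ).inv.isBigO
  refine IsBigO.of_pow two_ne_zero
    ((hquot.mul (isBigO_refl (fun n : ℕ => (n.factorial : ℝ)⁻¹) atTop)).congr' ?_ ?_)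
  · filter_upwards [eventually_ge_atTop 1] with n hn
    have hn' : (1 : ℝ) ≤ n := by exact_mod_cast hn
    have hβn := Gamma_pos_of_pos (by linarith : 0 < β + n + 1)
    have hγn := Gamma_pos_of_pos (by linarith : 0 < γ + n + 1)
    simp only [Pi.inv_apply, Pi.pow_apply]
    rw [mul_pow, sq_jacobiDelta hβ hγ hn]
    field_simp
  · filter_upwards [eventually_gt_atTop 0] with n hn
    have hn' : (0 : ℝ) < n := by exact_mod_cast hn
    have hpow : ((n : ℝ) ^ (β + 1 / 2)) ^ 2 = n * (n : ℝ) ^ β * (n : ℝ) ^ β := by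
      rw [rpow_add hn', mul_pow, ← sqrt_eq_rpow, sq_sqrt hn'.le]
      ring
    simp only [Pi.inv_apply, Pi.pow_apply]
    rw [hpow, rpow_add hn']
    field_simp

/-! ### Orthogonality and the uniform bound -/

theorem integral_rpow_mul_sub_rpow {L β γ : ℝ} (hL : 0 < L) (hβ : -1 < β) (hγ : -1 < γ) :
    ∫ x in (0 : ℝ)..L, x ^ β * (L - x) ^ γ = L ^ (β + γ + 1) * betaB (β + 1) (γ + 1) := by
  have hscaled := Complex.betaIntegral_scaled ((β + 1 : ℝ) : ℂ) ((γ + 1 : ℝ) : ℂ) hL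
  rw [Complex.betaIntegral_eq_Gamma_mul_div _ _ (by rw [Complex.ofReal_re]; linarith)
    (by rw [Complex.ofReal_re]; linarith)] at hscaled
  have hintegrand : ∀ x ∈ uIcc 0 L, ((x ^ β * (L - x) ^ γ : ℝ) : ℂ) =
      (x : ℂ) ^ (((β + 1 : ℝ) : ℂ) - 1) * ((L : ℂ) - x) ^ (((γ + 1 : ℝ) : ℂ) - 1) := by
    intro x hx
    rw [uIcc_of_le hL.le] at hx
    push_cast [Complex.ofReal_cpow hx.1, Complex.ofReal_cpow (sub_nonneg.2 hx.2)]
    rw [add_sub_cancel_right, add_sub_cancel_right]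
  apply Complex.ofReal_injective
  rw [← intervalIntegral.integral_ofReal, intervalIntegral.integral_congr hintegrand, hscaled,
    betaB, ← Complex.ofReal_add, Complex.Gamma_ofReal, Complex.Gamma_ofReal, Complex.Gamma_ofReal]
  push_cast [Complex.ofReal_cpow hL.le]
  rw [show (β : ℂ) + 1 + (γ + 1) - 1 = β + γ + 1 by ring]

section JacobiMeasure

variable {a b β γ : ℝ}

/-- The measure `ω(x) dx` on `(a, b)`, with `ω(x) = (x - a) ^ β * (b - x) ^ γ`. -/
noncomputable def jacobiMeasure (a b β γ : ℝ) : Measure ℝ :=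
  (volume.restrict (Ioo a b)).withDensity
    fun x => (((x - a) ^ β * (b - x) ^ γ).toNNReal : ENNReal)

theorem ae_mem_Ioo_jacobiMeasure : ∀ᵐ x ∂jacobiMeasure a b β γ, x ∈ Ioo a b :=
  (withDensity_absolutelyContinuous _ _).ae_le (ae_restrict_mem measurableSet_Ioo)

theorem measurable_toNNReal_jacobiWeight :
    Measurable fun x : ℝ => ((x - a) ^ β * (b - x) ^ γ).toNNReal := by
  fun_prop

theorem toNNReal_jacobiWeight_smul (g : ℝ → ℝ) {x : ℝ} (hx : x ∈ Ioo a b) :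
    ((x - a) ^ β * (b - x) ^ γ).toNNReal • g x = g x * ((x - a) ^ β * (b - x) ^ γ) := by
  have hleft : 0 < x - a := sub_pos.2 hx.1
  have hright : 0 < b - x := sub_pos.2 hx.2
  rw [NNReal.smul_def, coe_toNNReal _ (by positivity), smul_eq_mul, mul_comm]

theorem integral_jacobiMeasure (g : ℝ → ℝ) :
    ∫ x, g x ∂jacobiMeasure a b β γ = ∫ x in Ioo a b, g x * ((x - a) ^ β * (b - x) ^ γ) := by
  rw [jacobiMeasure, integral_withDensity_eq_integral_smul measurable_toNNReal_jacobiWeight]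
  exact setIntegral_congr_fun measurableSet_Ioo fun _ => toNNReal_jacobiWeight_smul g

theorem integrable_jacobiMeasure_iff {g : ℝ → ℝ} :
    Integrable g (jacobiMeasure a b β γ) ↔
      IntegrableOn (fun x => g x * ((x - a) ^ β * (b - x) ^ γ)) (Ioo a b) := by
  rw [jacobiMeasure, integrable_withDensity_iff_integrable_smul measurable_toNNReal_jacobiWeight]
  exact integrableOn_congr_fun (fun _ => toNNReal_jacobiWeight_smul g) measurableSet_Ioo

theorem integral_one_jacobiMeasure (hab : a < b) (hβ : -1 < β) (hγ : -1 < γ) :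
    ∫ _, (1 : ℝ) ∂jacobiMeasure a b β γ =
      (b - a) ^ (β + γ + 1) * betaB (β + 1) (γ + 1) := by
  rw [integral_jacobiMeasure, ← integral_rpow_mul_sub_rpow (sub_pos.2 hab) hβ hγ,
    ← integral_Ioc_eq_integral_Ioo, ← intervalIntegral.integral_of_le hab.le]
  simpa using intervalIntegral.integral_comp_sub_right (a := a) (b := b)
    (fun x => x ^ β * (b - a - x) ^ γ) a

theorem integrable_eval_jacobiMeasure (hab : a < b) (hβ : -1 < β) (hγ : -1 < γ)
    (P : Polynomial ℝ) : Integrable (fun x => P.eval x) (jacobiMeasure a b β γ) := by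
  have hone : Integrable (fun _ => (1 : ℝ)) (jacobiMeasure a b β γ) := by
    refine .of_integral_ne_zero ?_
    have hbeta : 0 < betaB (β + 1) (γ + 1) :=
      ProbabilityTheory.beta_pos (by linarith) (by linarith)
    rw [integral_one_jacobiMeasure hab hβ hγ]
    exact (mul_pos (rpow_pos_of_pos (sub_pos.2 hab) _) hbeta).ne'
  obtain ⟨B, hB⟩ := (isCompact_Icc (a := a) (b := b)).exists_bound_of_continuousOn
    P.continuous.continuousOn
  simpa using hone.bdd_mul (c := B) P.continuous.aestronglyMeasurable
    (ae_mem_Ioo_jacobiMeasure.mono fun x hx => hB x (Ioo_subset_Icc_self hx))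

theorem wnorm_eq_lpNorm_jacobiMeasure {q : ℝ} (hq : 0 < q) {f : ℝ → ℝ}
    (hf : AEStronglyMeasurable f (jacobiMeasure a b β γ)) :
    wnorm a b β γ q f = lpNorm f (ENNReal.ofReal q) (jacobiMeasure a b β γ) := by
  rw [lpNorm_eq_integral_norm_rpow_toReal (by simpa using hq) ENNReal.ofReal_ne_top hf,
    ENNReal.toReal_ofReal hq.le, integral_jacobiMeasure, wnorm, one_div]
  rfl

theorem memWLp_of_memLp_jacobiMeasure {q : ℝ} (hq : 0 < q) {f : ℝ → ℝ}
    (hf : MemLp f (ENNReal.ofReal q) (jacobiMeasure a b β γ)) : MemWLp a b β γ q f := by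
  refine ⟨measurableSet_Ioo, integrable_jacobiMeasure_iff.1 ?_⟩
  simpa [ENNReal.toReal_ofReal hq.le] using
    hf.integrable_norm_rpow (by simpa using hq) ENNReal.ofReal_ne_top

end JacobiMeasure

section Orthogonality

open Polynomial

variable {a b β γ : ℝ}

theorem hasDerivAt_weight_mul_rodriguesPoly {x : ℝ} (hx : x ∈ Ioo a b) (n : ℕ) :
    HasDerivAt
      (fun t => (t - a) ^ (β + 1) * (b - t) ^ (γ + 1) *
        (rodriguesPoly a b n (β + 1) (γ + 1)).eval t)
      ((x - a) ^ β * (b - x) ^ γ * (rodriguesPoly a b (n + 1) β γ).eval x) x := by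
  have ha : x - a ≠ 0 := (sub_pos.2 hx.1).ne'
  have hb : b - x ≠ 0 := (sub_pos.2 hx.2).ne'
  have hleft : HasDerivAt (fun t : ℝ => t - a) 1 x := (hasDerivAt_id x).sub_const a
  have hright : HasDerivAt (fun t : ℝ => b - t) (-1) x := (hasDerivAt_id x).const_sub b
  refine (((hleft.rpow_const (p := β + 1) (.inl ha)).fun_mul
    (hright.rpow_const (p := γ + 1) (.inl hb))).fun_mul
      ((rodriguesPoly a b n (β + 1) (γ + 1)).hasDerivAt x)).congr_deriv ?_
  rw [eval_rodriguesPoly_succ, add_sub_cancel_right, add_sub_cancel_right, rpow_add_one ha,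
    rpow_add_one hb]
  ring

theorem iteratedDeriv_eq_weight_mul_rodriguesPoly (n : ℕ) {x : ℝ} (hx : x ∈ Ioo a b) :
    iteratedDeriv n (fun t : ℝ => (t - a) ^ (β + n) * (b - t) ^ (γ + n)) x =
      (x - a) ^ β * (b - x) ^ γ * (rodriguesPoly a b n β γ).eval x := by
  induction n generalizing β γ x with
  | zero => simp [rodriguesPoly]
  | succ n ih =>
    rw [iteratedDeriv_succ, ← (hasDerivAt_weight_mul_rodriguesPoly hx n).deriv]
    refine EventuallyEq.deriv_eq ?_
    filter_upwards [isOpen_Ioo.mem_nhds hx] with y hy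
    rw [← ih hy, Nat.cast_succ, add_right_comm β, add_right_comm γ, add_assoc β, add_assoc γ]

theorem integral_mul_rodriguesPoly_succ (hab : a < b) (hβ : -1 < β) (hγ : -1 < γ) (P : ℝ[X])
    (n : ℕ) :
    ∫ x, (P * rodriguesPoly a b (n + 1) β γ).eval x ∂jacobiMeasure a b β γ =
      -∫ x, (derivative P * rodriguesPoly a b n (β + 1) (γ + 1)).eval x
        ∂jacobiMeasure a b (β + 1) (γ + 1) := by
  have hint := integrable_jacobiMeasure_iff.1
    (integrable_eval_jacobiMeasure hab hβ hγ (P * rodriguesPoly a b (n + 1) β γ))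
  have hint' := integrable_jacobiMeasure_iff.1
    (integrable_eval_jacobiMeasure (β := β + 1) (γ := γ + 1) hab (by linarith) (by linarith)
      (derivative P * rodriguesPoly a b n (β + 1) (γ + 1)))
  have hcont : Continuous fun t => P.eval t * ((t - a) ^ (β + 1) * (b - t) ^ (γ + 1) *
      (rodriguesPoly a b n (β + 1) (γ + 1)).eval t) :=
    P.continuous.mul (((continuous_sub_right a).rpow_const fun _ => .inr (by linarith)).mul
      ((continuous_sub_left b).rpow_const fun _ => .inr (by linarith)) |>.mul
        (rodriguesPoly a b n (β + 1) (γ + 1)).continuous)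
  have hderiv : ∀ x ∈ Ioo a b, HasDerivAt (fun t => P.eval t * ((t - a) ^ (β + 1) *
      (b - t) ^ (γ + 1) * (rodriguesPoly a b n (β + 1) (γ + 1)).eval t))
      ((P * rodriguesPoly a b (n + 1) β γ).eval x * ((x - a) ^ β * (b - x) ^ γ) +
        (derivative P * rodriguesPoly a b n (β + 1) (γ + 1)).eval x *
          ((x - a) ^ (β + 1) * (b - x) ^ (γ + 1))) x := fun x hx =>
    ((P.hasDerivAt x).fun_mul (hasDerivAt_weight_mul_rodriguesPoly hx n)).congr_deriv
      (by rw [eval_mul, eval_mul]; ring)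
  have hftc := intervalIntegral.integral_eq_sub_of_hasDerivAt_of_le hab.le hcont.continuousOn
    hderiv ((intervalIntegrable_iff_integrableOn_Ioo_of_le hab.le).2 (hint.add hint'))
  rw [sub_self, sub_self, zero_rpow (by linarith), zero_rpow (by linarith), mul_zero, zero_mul,
    zero_mul, zero_mul, mul_zero, mul_zero, sub_self, intervalIntegral.integral_of_le hab.le,
    integral_Ioc_eq_integral_Ioo, integral_add hint hint'] at hftc
  rw [integral_jacobiMeasure, integral_jacobiMeasure]
  exact eq_neg_of_add_eq_zero_left hftc

theorem integral_rodriguesPoly_succ_mul_succ (hab : a < b) (hβ : -1 < β) (hγ : -1 < γ)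
    (m n : ℕ) :
    ∫ x, (rodriguesPoly a b (m + 1) β γ * rodriguesPoly a b (n + 1) β γ).eval x
        ∂jacobiMeasure a b β γ =
      ((m : ℝ) + 1) * (m + β + γ + 2) *
        ∫ x, (rodriguesPoly a b m (β + 1) (γ + 1) * rodriguesPoly a b n (β + 1) (γ + 1)).eval x
          ∂jacobiMeasure a b (β + 1) (γ + 1) := by
  rw [integral_mul_rodriguesPoly_succ hab hβ hγ, derivative_rodriguesPoly_succ,
    ← integral_const_mul, ← integral_neg]
  congr 1 with x
  rw [mul_assoc (C _), eval_C_mul]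
  ring

theorem integral_rodriguesPoly_mul_of_ne (hab : a < b) (hβ : -1 < β) (hγ : -1 < γ) {m n : ℕ}
    (hmn : m ≠ n) :
    ∫ x, (rodriguesPoly a b m β γ * rodriguesPoly a b n β γ).eval x ∂jacobiMeasure a b β γ =
      0 := by
  induction m generalizing n β γ with
  | zero =>
    obtain ⟨n, rfl⟩ := Nat.exists_eq_add_one_of_ne_zero hmn.symm
    rw [integral_mul_rodriguesPoly_succ hab hβ hγ]
    simp [rodriguesPoly]
  | succ m ih =>
    cases n with
    | zero =>
      rw [mul_comm, integral_mul_rodriguesPoly_succ hab hβ hγ]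
      simp [rodriguesPoly]
    | succ n =>
      rw [integral_rodriguesPoly_succ_mul_succ hab hβ hγ,
        ih (by linarith) (by linarith) (by simpa using hmn), mul_zero]

theorem integral_rodriguesPoly_mul_self (hab : a < b) (hβ : -1 < β) (hγ : -1 < γ) {n : ℕ}
    (hn : 0 < β + γ + n + 1) :
    ∫ x, (rodriguesPoly a b n β γ * rodriguesPoly a b n β γ).eval x ∂jacobiMeasure a b β γ =
      (b - a) ^ (2 * (n : ℝ) + β + γ + 1) *
        (n.factorial * Gamma (β + n + 1) * Gamma (γ + n + 1) /
          ((β + γ + 2 * n + 1) * Gamma (β + γ + n + 1))) := by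
  induction n generalizing β γ with
  | zero =>
    have hne : β + γ + 1 ≠ 0 := by simpa using hn.ne'
    have hone := integral_one_jacobiMeasure hab hβ hγ
    rw [betaB, show β + 1 + (γ + 1) = β + γ + 1 + 1 by ring, Gamma_add_one hne] at hone
    simpa [rodriguesPoly] using hone
  | succ n ih =>
    push_cast at hn
    have hpos : 0 < β + γ + n + 2 := by linarith
    rw [integral_rodriguesPoly_succ_mul_succ hab hβ hγ,
      ih (by linarith) (by linarith) (by linarith),
      show β + 1 + (γ + 1) + (n : ℝ) + 1 = β + γ + n + 2 + 1 by ring, Gamma_add_one hpos.ne',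
      show ((n : ℝ) + β + γ + 2) = β + γ + n + 2 by ring]
    push_cast [Nat.factorial_succ]
    rw [show β + γ + ((n : ℝ) + 1) + 1 = β + γ + n + 2 by ring,
      show β + ((n : ℝ) + 1) + 1 = β + 1 + n + 1 by ring,
      show γ + ((n : ℝ) + 1) + 1 = γ + 1 + n + 1 by ring,
      show 2 * ((n : ℝ) + 1) + β + γ + 1 = 2 * n + (β + 1) + (γ + 1) + 1 by ring,
      show β + γ + 2 * ((n : ℝ) + 1) + 1 = β + 1 + (γ + 1) + 2 * n + 1 by ring]
    field_simp

end Orthogonality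

section JacobiP

variable {a b β γ : ℝ}

/-- The factor between `jacobiP` and the unnormalized polynomial `rodriguesPoly`. -/
noncomputable def jacobiConst (a b β γ : ℝ) (n : ℕ) : ℝ :=
  (-1) ^ n * (b - a) ^ (-(n : ℝ) - (β + γ + 1) / 2) * jacobiDelta β γ n

theorem jacobiP_eq_jacobiConst_mul_eval (n : ℕ) {x : ℝ} (hx : x ∈ Ioo a b) :
    jacobiP a b β γ n x = jacobiConst a b β γ n * (rodriguesPoly a b n β γ).eval x := by
  have hleft := rpow_pos_of_pos (sub_pos.2 hx.1) β
  have hright := rpow_pos_of_pos (sub_pos.2 hx.2) γ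
  rw [jacobiP, jacobiConst, iteratedDeriv_eq_weight_mul_rodriguesPoly n hx,
    rpow_neg (sub_nonneg.2 hx.1.le), rpow_neg (sub_nonneg.2 hx.2.le)]
  field_simp

theorem aestronglyMeasurable_jacobiP (n : ℕ) :
    AEStronglyMeasurable (jacobiP a b β γ n) (jacobiMeasure a b β γ) :=
  ((rodriguesPoly a b n β γ).continuous.const_mul
    (jacobiConst a b β γ n)).aestronglyMeasurable.congr <|
      ae_mem_Ioo_jacobiMeasure.mono fun _ hx => (jacobiP_eq_jacobiConst_mul_eval n hx).symm

theorem integral_jacobiP_mul (m n : ℕ) :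
    ∫ x, jacobiP a b β γ m x * jacobiP a b β γ n x ∂jacobiMeasure a b β γ =
      jacobiConst a b β γ m * jacobiConst a b β γ n *
        ∫ x, (rodriguesPoly a b m β γ * rodriguesPoly a b n β γ).eval x
          ∂jacobiMeasure a b β γ := by
  rw [← integral_const_mul]
  refine integral_congr_ae (ae_mem_Ioo_jacobiMeasure.mono fun x hx => ?_)
  simp only [jacobiP_eq_jacobiConst_mul_eval _ hx, Polynomial.eval_mul]
  ring

theorem sq_jacobiConst (hab : a < b) (n : ℕ) :
    jacobiConst a b β γ n ^ 2 =
      ((b - a) ^ (2 * (n : ℝ) + β + γ + 1))⁻¹ * jacobiDelta β γ n ^ 2 := by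
  have hlength := sub_pos.2 hab
  rw [jacobiConst, mul_pow, mul_pow, ← pow_mul, pow_mul', neg_one_sq, one_pow, one_mul,
    ← rpow_mul_natCast hlength.le, ← rpow_neg hlength.le]
  congr 2
  push_cast
  ring

theorem integral_jacobiP_mul_jacobiP (hab : a < b) (hβ : -1 < β) (hγ : -1 < γ) {m : ℕ}
    (hm : 1 ≤ m) (n : ℕ) :
    ∫ x, jacobiP a b β γ m x * jacobiP a b β γ n x ∂jacobiMeasure a b β γ =
      if m = n then 1 else 0 := by
  rw [integral_jacobiP_mul]
  split_ifs with hmn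
  · subst hmn
    have hm' : (1 : ℝ) ≤ m := by exact_mod_cast hm
    have hβγ : 0 < β + γ + m + 1 := by linarith
    have hΓβ := Gamma_pos_of_pos (by linarith : 0 < β + m + 1)
    have hΓγ := Gamma_pos_of_pos (by linarith : 0 < γ + m + 1)
    have hfactor : 0 < β + γ + 2 * m + 1 := by linarith
    have hpow := rpow_pos_of_pos (sub_pos.2 hab) (2 * (m : ℝ) + β + γ + 1)
    rw [integral_rodriguesPoly_mul_self hab hβ hγ hβγ, ← sq, sq_jacobiConst hab,
      sq_jacobiDelta hβ hγ hm]
    field_simp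
  · rw [integral_rodriguesPoly_mul_of_ne hab hβ hγ hmn, mul_zero]

theorem abs_jacobiConst_mul_sub_pow (hab : a < b) (n : ℕ) :
    |jacobiConst a b β γ n| * (b - a) ^ n =
      (b - a) ^ (-(β + γ + 1) / 2) * jacobiDelta β γ n := by
  have hlength := sub_pos.2 hab
  have hδ : 0 ≤ jacobiDelta β γ n := sqrt_nonneg _
  rw [jacobiConst, abs_mul, abs_mul, abs_pow, abs_neg, abs_one, one_pow, one_mul,
    abs_of_pos (rpow_pos_of_pos hlength _), abs_of_nonneg hδ, mul_right_comm, ← rpow_natCast,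
    ← rpow_add hlength]
  ring_nf

theorem abs_jacobiConst_mul_eval_left (hab : a < b) (hβ : -1 < β) (n : ℕ) :
    |jacobiConst a b β γ n * (rodriguesPoly a b n β γ).eval a| =
      (b - a) ^ (-(β + γ + 1) / 2) / Gamma (β + 1) *
        (jacobiDelta β γ n * Gamma (β + n + 1)) := by
  have hβ' : 0 < β + 1 := by linarith
  rw [eval_left_rodriguesPoly, abs_mul, abs_mul, abs_pow, abs_of_pos (sub_pos.2 hab),
    abs_of_pos (ascPochhammer_pos n _ hβ'), ← mul_assoc, abs_jacobiConst_mul_sub_pow hab,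
    add_right_comm β (n : ℝ), gamma_add_natCast hβ']
  field_simp

theorem abs_jacobiConst_mul_eval_right (hab : a < b) (hγ : -1 < γ) (n : ℕ) :
    |jacobiConst a b β γ n * (rodriguesPoly a b n β γ).eval b| =
      (b - a) ^ (-(β + γ + 1) / 2) / Gamma (γ + 1) *
        (jacobiDelta γ β n * Gamma (γ + n + 1)) := by
  have hγ' : 0 < γ + 1 := by linarith
  rw [eval_right_rodriguesPoly, abs_mul, abs_mul, abs_pow, abs_sub_comm,
    abs_of_pos (sub_pos.2 hab), abs_of_pos (ascPochhammer_pos n _ hγ'), ← mul_assoc,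
    abs_jacobiConst_mul_sub_pow hab, jacobiDelta_swap, add_right_comm γ, gamma_add_natCast hγ']
  field_simp

theorem natCast_rpow_isBigO_of_le {s t : ℝ} (hst : s ≤ t) :
    (fun n : ℕ => (n : ℝ) ^ s) =O[atTop] fun n : ℕ => (n : ℝ) ^ t := by
  refine .of_bound' ?_
  filter_upwards [eventually_ge_atTop 1] with n hn
  have hn' : (1 : ℝ) ≤ n := by exact_mod_cast hn
  rw [norm_of_nonneg (by positivity), norm_of_nonneg (by positivity)]
  exact rpow_le_rpow_of_exponent_le hn' hst

theorem abs_jacobiConst_mul_eval_endpoints_isBigO (hab : a < b) (hβ : -1 < β) (hγ : -1 < γ) :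
    (fun n => |jacobiConst a b β γ n * (rodriguesPoly a b n β γ).eval a| +
      |jacobiConst a b β γ n * (rodriguesPoly a b n β γ).eval b|) =O[atTop]
        fun n : ℕ => (n : ℝ) ^ (max β γ + 1 / 2) := by
  simp only [abs_jacobiConst_mul_eval_left hab hβ, abs_jacobiConst_mul_eval_right hab hγ]
  exact (((jacobiDelta_mul_gamma_isBigO hβ hγ).trans
      (natCast_rpow_isBigO_of_le (by gcongr; exact le_max_left β γ))).const_mul_left _).add
    (((jacobiDelta_mul_gamma_isBigO hγ hβ).trans
      (natCast_rpow_isBigO_of_le (by gcongr; exact le_max_right β γ))).const_mul_left _)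

theorem abs_jacobiP_succ_le_max_endpoints (hβ : -1 < β) (hγ : -1 < γ)
    (hmax : -1 / 2 ≤ max β γ) (n : ℕ) {x : ℝ} (hx : x ∈ Ioo a b) :
    |jacobiP a b β γ (n + 1) x| ≤
      max |jacobiConst a b β γ (n + 1) * (rodriguesPoly a b (n + 1) β γ).eval a|
        |jacobiConst a b β γ (n + 1) * (rodriguesPoly a b (n + 1) β γ).eval b| := by
  have hΛ : 0 < ((n : ℝ) + 1) * (n + β + γ + 2) :=
    mul_pos (by positivity) (by linarith [(Nat.cast_nonneg n : (0 : ℝ) ≤ n)])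
  rw [jacobiP_eq_jacobiConst_mul_eval _ hx, abs_mul, abs_mul, abs_mul,
    ← mul_max_of_nonneg _ _ (abs_nonneg _)]
  gcongr
  exact abs_eval_le_max_of_jacobi_ode hmax hΛ (rodriguesPoly_succ_ode a b n β γ)
    (Ioo_subset_Icc_self hx)

theorem exists_abs_jacobiP_succ_le (hab : a < b) (hβ : -1 < β) (hγ : -1 < γ)
    (hmax : -1 / 2 ≤ max β γ) :
    ∃ K, 0 < K ∧ ∀ (n : ℕ), ∀ x ∈ Ioo a b,
      |jacobiP a b β γ (n + 1) x| ≤ K * ((n : ℝ) + 1) ^ (max β γ + 1 / 2) := by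
  obtain ⟨K, hK, hle⟩ :=
    bound_of_isBigO_nat_atTop (abs_jacobiConst_mul_eval_endpoints_isBigO hab hβ hγ)
  refine ⟨K, hK, fun n x hx => (abs_jacobiP_succ_le_max_endpoints hβ hγ hmax n hx).trans <|
    (max_le_add_of_nonneg (abs_nonneg _) (abs_nonneg _)).trans ?_⟩
  have hpos : (0 : ℝ) < ((n + 1 : ℕ) : ℝ) ^ (max β γ + 1 / 2) := by positivity
  have hbound := (le_norm_self _).trans (hle hpos.ne')
  rwa [norm_of_nonneg hpos.le, Nat.cast_succ] at hbound

end JacobiP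

theorem stmt2 (a b β γ q : ℝ) (hab : a < b) (hβ : -1 < β) (hγ : -1 < γ)
    (hmax : -(1 : ℝ) / 2 ≤ max β γ) (hq : 2 ≤ q) :
    ∃ C : ℝ, 0 < C ∧ ∀ c : ℕ → ℝ,
      Summable (fun n : ℕ => |c (n + 1)| ^ q * ((n : ℝ) + 1) ^ ((max β γ + 3 / 2) * (q - 2))) →
      ∃ f : ℝ → ℝ, MemWLp a b β γ q f ∧
        Tendsto (fun N : ℕ => wnorm a b β γ q
            (fun x => (∑ n ∈ Finset.range N, c (n + 1) * jacobiP a b β γ (n + 1) x) - f x))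
          atTop (nhds 0) ∧
        wnorm a b β γ q f ≤
          C * (∑' n : ℕ, |c (n + 1)| ^ q *
            ((n : ℝ) + 1) ^ ((max β γ + 3 / 2) * (q - 2))) ^ (1 / q) := by
  obtain ⟨K, hK, hsup⟩ := exists_abs_jacobiP_succ_le hab hβ hγ hmax
  obtain ⟨C, hC, hseries⟩ := exists_lpNorm_series_le_of_orthonormal (μ := jacobiMeasure a b β γ)
    (φ := fun n => jacobiP a b β γ (n + 1)) hK.le (M := max β γ + 1 / 2) (by linarith) hq
    (fun n => aestronglyMeasurable_jacobiP (n + 1))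
    (fun m n => by simpa using integral_jacobiP_mul_jacobiP hab hβ hγ m.succ_pos (n + 1))
    (fun n => ae_mem_Ioo_jacobiMeasure.mono (hsup n))
  rw [show max β γ + 1 / 2 + 1 = max β γ + 3 / 2 by ring] at hseries
  refine ⟨C, hC, fun c hc => ?_⟩
  obtain ⟨f, hf, hlim, hle⟩ := hseries (fun n => c (n + 1)) hc
  have hq0 : 0 < q := by linarith
  refine ⟨f, memWLp_of_memLp_jacobiMeasure hq0 hf, hlim.congr fun N => ?_, ?_⟩
  · have hsum : AEStronglyMeasurable
        (fun x => ∑ n ∈ Finset.range N, c (n + 1) * jacobiP a b β γ (n + 1) x)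
        (jacobiMeasure a b β γ) :=
      Finset.aestronglyMeasurable_fun_sum _ fun n _ =>
        (aestronglyMeasurable_jacobiP (n + 1)).const_mul _
    exact (wnorm_eq_lpNorm_jacobiMeasure hq0 (hsum.sub hf.aestronglyMeasurable)).symm
  · rwa [wnorm_eq_lpNorm_jacobiMeasure hq0 hf.aestronglyMeasurable]
end

section
/- Let β,γ > -1 and α ∈ (-1,0). There exists a constant C > 0, depending only on α, β, γ, such that for all integers m ≥ 1 and 0 ≤ k ≤ m-1: I_{mk} ≤ C·m^{-2α-γ-3/2}. -/
open Real MeasureTheory Set Filter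

open Asymptotics


/-- `I_{mk} = δ'_m·Γ(β+m+1)·(Π_{i=1}^{m-k}(m-k-α-i))/Γ(α+β+k+γ+m+2)`. -/
noncomputable def Imk (α β γ : ℝ) (m k : ℕ) : ℝ :=
  jacobiDelta β γ m * Real.Gamma (β + m + 1) *
    (∏ i ∈ Finset.Icc 1 (m - k), ((m : ℝ) - k - α - i)) /
    Real.Gamma (α + β + k + γ + m + 2)

/-! For large `m` the values `|I_{mk}|` decrease in `k`: passing from `k + 1` to `k` multiplies
`I_{mk}` by `(m - k - 1 - α) (α + β + γ + k + m + 2)`, whose first factor stays away from `0`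
because `α` is not a natural number, while the second one tends to infinity with `m`. Hence only
`k = 0` matters, and there Euler's limit formula in the form `Γ(c + n + 1) ~ n! n ^ c` gives
`I_{m0} ~ √2 / Γ(-α) · m ^ (-2α - γ - 3/2)`. The finitely many remaining `m` only affect the
constant. -/

section GammaAsymptotics

theorem Gamma_add_natCast_eq_mul_prod {s : ℝ} (hs : ∀ k : ℕ, s ≠ -k) (n : ℕ) :
    Real.Gamma (s + n) = Real.Gamma s * ∏ j ∈ Finset.range n, (s + j) := by
  induction n with
  | zero => simp
  | succ n ih =>
    have hsn : s + n ≠ 0 := fun h => hs n (eq_neg_of_add_eq_zero_left h)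
    rw [Nat.cast_add_one, ← add_assoc, Real.Gamma_add_one hsn, ih, Finset.prod_range_succ]
    ring

theorem isEquivalent_natCast_add_const (c : ℝ) :
    (fun n : ℕ => (n : ℝ) + c) ~[atTop] fun n : ℕ => (n : ℝ) :=
  IsEquivalent.refl.add_const_of_norm_tendsto_atTop
    (tendsto_norm_atTop_atTop.comp tendsto_natCast_atTop_atTop)

theorem isEquivalent_Gamma_add_natCast_add_one_of_ne_neg_natCast {c : ℝ}
    (hc : ∀ k : ℕ, c ≠ -k) :
    (fun n : ℕ => Real.Gamma (c + n + 1)) ~[atTop] fun n : ℕ => n.factorial * (n : ℝ) ^ c := by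
  have hΓ : Real.Gamma c ≠ 0 := Real.Gamma_ne_zero hc
  have hlim : Tendsto (fun n : ℕ => Real.Gamma c * (Real.GammaSeq c n)⁻¹) atTop (nhds 1) := by
    simpa only [mul_inv_cancel₀ hΓ] using
      ((Real.GammaSeq_tendsto_Gamma c).inv₀ hΓ).const_mul (Real.Gamma c)
  refine isEquivalent_of_tendsto_one (hlim.congr fun n => ?_)
  have hprod := Gamma_add_natCast_eq_mul_prod hc (n + 1)
  rw [Nat.cast_add_one, ← add_assoc] at hprod
  rw [Pi.div_apply, hprod, Real.GammaSeq, inv_div, mul_comm ((n : ℝ) ^ c), mul_div_assoc]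

theorem isEquivalent_Gamma_add_natCast_add_one_of_succ {c : ℝ}
    (h : (fun n : ℕ => Real.Gamma (c + 1 + n + 1)) ~[atTop]
      fun n : ℕ => n.factorial * (n : ℝ) ^ (c + 1)) :
    (fun n : ℕ => Real.Gamma (c + n + 1)) ~[atTop] fun n : ℕ => n.factorial * (n : ℝ) ^ c := by
  have hquot := h.div (isEquivalent_natCast_add_const (c + 1))
  refine (hquot.congr_left ?_).congr_right ?_
  · filter_upwards [tendsto_natCast_atTop_atTop.eventually_gt_atTop (-(c + 1))] with n hn
    have hpos : 0 < (n : ℝ) + (c + 1) := by linarith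
    have hshift : c + n + 1 = n + (c + 1) := by ring
    simp only [Pi.div_apply]
    rw [add_comm (c + 1), Real.Gamma_add_one hpos.ne', mul_div_cancel_left₀ _ hpos.ne', hshift]
  · filter_upwards [eventually_ne_atTop 0] with n hn
    have hn' : (n : ℝ) ≠ 0 := Nat.cast_ne_zero.mpr hn
    simp only [Pi.div_apply]
    rw [Real.rpow_add_one hn', ← mul_assoc, mul_div_cancel_right₀ _ hn']

theorem isEquivalent_Gamma_add_natCast_add_one (c : ℝ) :
    (fun n : ℕ => Real.Gamma (c + n + 1)) ~[atTop] fun n : ℕ => n.factorial * (n : ℝ) ^ c := by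
  obtain ⟨N, hN⟩ := exists_nat_gt (-c)
  induction N generalizing c with
  | zero =>
    refine isEquivalent_Gamma_add_natCast_add_one_of_ne_neg_natCast fun k hk => ?_
    have : (0 : ℝ) ≤ k := k.cast_nonneg
    rw [Nat.cast_zero] at hN
    linarith
  | succ N ih =>
    refine isEquivalent_Gamma_add_natCast_add_one_of_succ (ih (c + 1) ?_)
    rw [Nat.cast_add_one] at hN
    linarith

theorem isEquivalent_prod_range_add_natCast {s : ℝ} (hs : ∀ k : ℕ, s ≠ -k) :
    (fun n : ℕ => ∏ j ∈ Finset.range n, (s + j)) ~[atTop]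
      fun n : ℕ => n.factorial * (n : ℝ) ^ (s - 1) / Real.Gamma s := by
  refine ((isEquivalent_Gamma_add_natCast_add_one (s - 1)).div
    (IsEquivalent.refl (u := fun _ => Real.Gamma s))).congr_left (Eventually.of_forall fun n => ?_)
  have hshift : s - 1 + n + 1 = s + n := by ring
  simp only [Pi.div_apply]
  rw [hshift, Gamma_add_natCast_eq_mul_prod hs, mul_div_cancel_left₀ _ (Real.Gamma_ne_zero hs)]

end GammaAsymptotics

theorem exists_pos_forall_le_abs_add_natCast {s : ℝ} (hs : ∀ k : ℕ, s ≠ -k) :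
    ∃ d > 0, ∀ j : ℕ, d ≤ |s + j| := by
  have hmem : -s ∉ Set.range ((↑) : ℕ → ℝ) := by
    rintro ⟨k, hk⟩
    exact hs k (by rw [hk, neg_neg])
  refine ⟨_, (Nat.isClosedEmbedding_coe_real.isClosed_range.notMem_iff_infDist_pos
    (Set.range_nonempty _)).1 hmem, fun j => ?_⟩
  calc Metric.infDist (-s) (Set.range ((↑) : ℕ → ℝ))
      ≤ dist (-s) j := Metric.infDist_le_dist_of_mem (Set.mem_range_self j)
    _ = |s + j| := by rw [Real.dist_eq, ← abs_neg, neg_sub, sub_neg_eq_add, add_comm]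

theorem isEquivalent_jacobiDelta (β γ : ℝ) :
    jacobiDelta β γ ~[atTop] fun n : ℕ => √2 * (n : ℝ) ^ (1 / 2 : ℝ) / n.factorial := by
  have hlinear : (fun n : ℕ => β + γ + 2 * n + 1) ~[atTop] fun n : ℕ => 2 * (n : ℝ) := by
    refine ((IsEquivalent.refl (u := fun _ : ℕ => (2 : ℝ))).mul
      (isEquivalent_natCast_add_const ((β + γ + 1) / 2))).congr_left
      (Eventually.of_forall fun n => ?_)
    simp only [Pi.mul_apply]
    ring
  have hΓ := isEquivalent_Gamma_add_natCast_add_one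
  have hfactorial := IsEquivalent.refl (u := fun n : ℕ => (n.factorial : ℝ)) (l := atTop)
  have hradicand : (fun n : ℕ => (β + γ + 2 * n + 1) * Real.Gamma (β + γ + n + 1) /
      (n.factorial * Real.Gamma (β + n + 1) * Real.Gamma (γ + n + 1))) ~[atTop]
      fun n : ℕ => 2 * (n : ℝ) / (n.factorial : ℝ) ^ 2 := by
    refine ((hlinear.mul (hΓ (β + γ))).div ((hfactorial.mul (hΓ β)).mul (hΓ γ))).congr_right ?_
    filter_upwards [eventually_gt_atTop 0] with n hn
    have hn' : (0 : ℝ) < n := Nat.cast_pos.mpr hn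
    simp only [Pi.div_apply, Pi.mul_apply, Real.rpow_add hn']
    field_simp
  have hnonneg : 0 ≤ fun n : ℕ => 2 * (n : ℝ) / (n.factorial : ℝ) ^ 2 := fun n => by positivity
  refine ((hradicand.rpow hnonneg (r := 1 / 2)).congr_left ?_).congr_right ?_
  · exact Eventually.of_forall fun n => (Real.sqrt_eq_rpow _).symm
  · refine Eventually.of_forall fun n => ?_
    simp only [Pi.pow_apply]
    rw [← Real.sqrt_eq_rpow, ← Real.sqrt_eq_rpow, Real.sqrt_div' _ (by positivity),
      Real.sqrt_sq (by positivity), Real.sqrt_mul zero_le_two]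

theorem prod_Icc_one_sub_eq_prod_range (α : ℝ) (j : ℕ) :
    ∏ i ∈ Finset.Icc 1 j, ((j : ℝ) - α - i) = ∏ i ∈ Finset.range j, (-α + i) := by
  rw [← Finset.prod_range_reflect, ← Finset.Ico_succ_right_eq_Icc, Finset.prod_Ico_eq_prod_range]
  refine Finset.prod_congr (by simp) fun i hi => ?_
  have hij : i + 1 ≤ j := Finset.mem_range.mp (by simpa using hi)
  rw [Nat.sub_sub, add_comm 1 i, Nat.cast_sub hij]
  push_cast
  ring

section Imk

variable {α : ℝ} (β γ : ℝ) {m k : ℕ}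

theorem Imk_eq_prod_range (h : k ≤ m) :
    Imk α β γ m k = jacobiDelta β γ m * Real.Gamma (β + m + 1) *
      (∏ i ∈ Finset.range (m - k), (-α + i)) / Real.Gamma (α + β + k + γ + m + 2) := by
  rw [← prod_Icc_one_sub_eq_prod_range, Imk, Nat.cast_sub h]

theorem Imk_eq_mul_Imk_succ (h : k < m) (hΓ : α + β + k + γ + m + 2 ≠ 0) :
    Imk α β γ m k = (-α + (m - (k + 1) : ℕ)) * (α + β + k + γ + m + 2) * Imk α β γ m (k + 1) := by
  have hshift : α + β + (k + 1 : ℕ) + γ + m + 2 = α + β + k + γ + m + 2 + 1 := by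
    push_cast
    ring
  have hsub : m - k = m - (k + 1) + 1 := by omega
  rw [Imk_eq_prod_range β γ h.le, Imk_eq_prod_range β γ h, hshift, Real.Gamma_add_one hΓ, hsub,
    Finset.prod_range_succ]
  field_simp

theorem eventually_forall_abs_Imk_le_abs_Imk_zero (hα : ∀ n : ℕ, α ≠ n) :
    ∀ᶠ m : ℕ in atTop, ∀ k ≤ m, |Imk α β γ m k| ≤ |Imk α β γ m 0| := by
  obtain ⟨d, hd, hdist⟩ := exists_pos_forall_le_abs_add_natCast fun k => neg_injective.ne (hα k)
  filter_upwards [tendsto_natCast_atTop_atTop.eventually_ge_atTop (d⁻¹ - (α + β + γ + 2))]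
    with m hm k hk
  induction k with
  | zero => exact le_rfl
  | succ k ih =>
    have hfactor : d⁻¹ ≤ α + β + k + γ + m + 2 := by
      have : (0 : ℝ) ≤ k := k.cast_nonneg
      linarith
    have hfactor_pos : 0 < α + β + k + γ + m + 2 := (inv_pos.mpr hd).trans_le hfactor
    have hone : 1 ≤ |-α + (m - (k + 1) : ℕ)| * |α + β + k + γ + m + 2| := by
      calc 1 = d * d⁻¹ := (mul_inv_cancel₀ hd.ne').symm
        _ ≤ |-α + (m - (k + 1) : ℕ)| * |α + β + k + γ + m + 2| := by
          rw [abs_of_pos hfactor_pos]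
          gcongr
          exact hdist _
    calc |Imk α β γ m (k + 1)|
        ≤ |-α + (m - (k + 1) : ℕ)| * |α + β + k + γ + m + 2| * |Imk α β γ m (k + 1)| :=
          le_mul_of_one_le_left (abs_nonneg _) hone
      _ = |Imk α β γ m k| := by rw [Imk_eq_mul_Imk_succ β γ hk hfactor_pos.ne', abs_mul, abs_mul]
      _ ≤ |Imk α β γ m 0| := ih (by omega)

theorem isEquivalent_Imk_zero (hα : ∀ n : ℕ, α ≠ n) :
    (fun m : ℕ => Imk α β γ m 0) ~[atTop]
      fun m : ℕ => √2 / Real.Gamma (-α) * (m : ℝ) ^ (-2 * α - γ - 3 / 2) := by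
  have hnum := isEquivalent_Gamma_add_natCast_add_one β
  have hden := isEquivalent_Gamma_add_natCast_add_one (α + β + γ + 1)
  have hprod := isEquivalent_prod_range_add_natCast fun k => neg_injective.ne (hα k)
  refine ((((isEquivalent_jacobiDelta β γ).mul hnum).mul hprod).div hden).congr_left ?_
    |>.congr_right ?_
  · refine Eventually.of_forall fun m => ?_
    have hshift : α + β + (0 : ℕ) + γ + m + 2 = α + β + γ + 1 + m + 1 := by
      push_cast
      ring
    simp only [Pi.div_apply, Pi.mul_apply]
    rw [Imk_eq_prod_range β γ m.zero_le, Nat.sub_zero, hshift]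
  · filter_upwards [eventually_gt_atTop 0] with m hm
    have hm' : (0 : ℝ) < m := Nat.cast_pos.mpr hm
    have hexp : (m : ℝ) ^ (-2 * α - γ - 3 / 2) =
        (m : ℝ) ^ (1 / 2 : ℝ) * (m : ℝ) ^ β * (m : ℝ) ^ (-α - 1) / (m : ℝ) ^ (α + β + γ + 1) := by
      rw [← Real.rpow_add hm', ← Real.rpow_add hm', ← Real.rpow_sub hm']
      congr 1
      ring
    simp only [Pi.div_apply, Pi.mul_apply]
    rw [hexp]
    field_simp

end Imk

theorem stmt3_general {α : ℝ} (β γ : ℝ) (hα : ∀ n : ℕ, α ≠ n) :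
    ∃ C : ℝ, 0 < C ∧ ∀ m k : ℕ, 1 ≤ m → k ≤ m →
      |Imk α β γ m k| ≤ C * (m : ℝ) ^ (-2 * α - γ - 3 / 2) := by
  choose K hK hmax using fun m : ℕ =>
    (Finset.range (m + 1)).exists_max_image (fun k => |Imk α β γ m k|)
      Finset.nonempty_range_add_one
  have hmax_le_zero : (fun m => Imk α β γ m (K m)) =O[atTop] fun m => Imk α β γ m 0 := by
    refine IsBigO.of_bound' ?_
    filter_upwards [eventually_forall_abs_Imk_le_abs_Imk_zero β γ hα] with m hm
    exact hm (K m) (Finset.mem_range_succ_iff.mp (hK m))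
  have hbound : (fun m => Imk α β γ m (K m)) =O[atTop]
      fun m : ℕ => (m : ℝ) ^ (-2 * α - γ - 3 / 2) :=
    (hmax_le_zero.trans (isEquivalent_Imk_zero β γ hα).isBigO).trans
      (isBigO_const_mul_self _ _ _)
  obtain ⟨C, hC, hle⟩ := bound_of_isBigO_nat_atTop hbound
  refine ⟨C, hC, fun m k hm hk => ?_⟩
  have hpow : 0 < (m : ℝ) ^ (-2 * α - γ - 3 / 2) := Real.rpow_pos_of_pos (Nat.cast_pos.mpr hm) _
  calc |Imk α β γ m k| ≤ |Imk α β γ m (K m)| := hmax m k (Finset.mem_range_succ_iff.mpr hk)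
    _ ≤ C * ‖(m : ℝ) ^ (-2 * α - γ - 3 / 2)‖ := hle hpow.ne'
    _ = C * (m : ℝ) ^ (-2 * α - γ - 3 / 2) := by rw [Real.norm_of_nonneg hpow.le]

theorem stmt3 (α β γ : ℝ) (hβ : -1 < β) (hγ : -1 < γ) (hα : α ∈ Set.Ioo (-1 : ℝ) 0) :
    ∃ C : ℝ, 0 < C ∧ ∀ m k : ℕ, 1 ≤ m → k ≤ m - 1 →
      Imk α β γ m k ≤ C * (m : ℝ) ^ (-2 * α - γ - 3 / 2) := by
  obtain ⟨C, hC, h⟩ := stmt3_general β γ fun n : ℕ => (hα.2.trans_le n.cast_nonneg).ne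
  exact ⟨C, hC, fun m k hm hk => (le_abs_self _).trans (h m k hm (hk.trans (m.sub_le 1)))⟩
end

section
/- Let β,γ > -1 and α ∈ (-1,0). There exists a constant C > 0, depending only on α, β, γ, such that for all integers m ≥ 1 and 0 ≤ k ≤ m-1: I_{mk} ≤ C·e^{2k}·m^{2ξ-2α-γ-5/2-2k}, where ξ is the Euler–Mascheroni constant. -/
open Real MeasureTheory Set Filter

open Asymptotics


/-!
Write the product in `I_{mk}` as `Γ(m-k-α) / Γ(-α)`. Two elementary inequalities reduce the estimate
to `k = 0`: each of the `k` steps from `Γ(α+β+γ+2+m)` to `Γ(α+β+γ+2+m+k)` gains a factor of size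
about `m`, and `m^k Γ(m-k-α) ≤ e^k Γ(m-α)`, since the step from `k` to `k + 1` costs at most
`(1 + 1/y)^(k+1) ≤ e` with `y ≥ k + 1`. Hence `I_{mk} ≲ e^k m^{-2k} I_{m0}`. By Euler's limit
formula `Γ(m+x) ~ Γ(m) m^x`, so `I_{m0} ~ (√2 / Γ(-α)) m^{-2α-γ-3/2}`. The Euler–Mascheroni constant
enters only through `2ξ - 5/2 > -3/2`.
-/

theorem Gamma_add_natCast {x : ℝ} (hx : ∀ k : ℕ, x ≠ -k) (n : ℕ) :
    Gamma (x + n) = (∏ j ∈ Finset.range n, (x + j)) * Gamma x := by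
  induction n with
  | zero => simp
  | succ n ih =>
    have hxn : x + n ≠ 0 := fun h ↦ hx n (eq_neg_of_add_eq_zero_left h)
    rw [Nat.cast_succ, ← add_assoc, Gamma_add_one hxn, ih, Finset.prod_range_succ]
    ring

theorem pow_mul_Gamma_le_Gamma_add {t x : ℝ} (ht : 0 ≤ t) (htx : t ≤ x) (hx : 0 < x) (k : ℕ) :
    t ^ k * Gamma x ≤ Gamma (x + k) := by
  induction k with
  | zero => simp
  | succ k ih =>
    rw [Nat.cast_succ, ← add_assoc, Gamma_add_one (by positivity)]
    calc t ^ (k + 1) * Gamma x = t * (t ^ k * Gamma x) := by ring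
      _ ≤ (x + k) * Gamma (x + k) := by
        gcongr
        linarith [k.cast_nonneg (α := ℝ)]

theorem min_one_mul_pow_mul_Gamma_le_Gamma_add {s t : ℝ} (hs : -1 < s) (ht : 1 ≤ t) (k : ℕ) :
    min 1 (s + 1) * t ^ k * Gamma (t + s) ≤ Gamma (t + s + k) := by
  have hts : 0 < t + s := by linarith
  have hΓ : 0 < Gamma (t + s) := Gamma_pos_of_pos hts
  cases k with
  | zero => simpa using mul_le_of_le_one_left hΓ.le (min_le_left 1 (s + 1))
  | succ k =>
    have hmin : min 1 (s + 1) * t ≤ t + s := by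
      nlinarith [min_le_left 1 (s + 1), min_le_right 1 (s + 1)]
    calc min 1 (s + 1) * t ^ (k + 1) * Gamma (t + s)
        = t ^ k * (min 1 (s + 1) * t * Gamma (t + s)) := by ring
      _ ≤ t ^ k * ((t + s) * Gamma (t + s)) := by gcongr
      _ = t ^ k * Gamma (t + s + 1) := by rw [Gamma_add_one hts.ne']
      _ ≤ Gamma (t + s + 1 + k) :=
        pow_mul_Gamma_le_Gamma_add (by linarith) (by linarith) (by linarith) k
      _ = Gamma (t + s + (k + 1 : ℕ)) := by push_cast; ring_nf

theorem one_add_inv_pow_le_exp_one {y : ℝ} {k : ℕ} (hk : k ≤ y) : (1 + y⁻¹) ^ k ≤ exp 1 := by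
  have hy : 0 ≤ y := k.cast_nonneg.trans hk
  calc (1 + y⁻¹) ^ k ≤ exp y⁻¹ ^ k := by
        gcongr
        linarith [add_one_le_exp y⁻¹]
    _ = exp (k / y) := by rw [← exp_nat_mul, div_eq_mul_inv]
    _ ≤ exp 1 := exp_le_exp.mpr (div_le_one_of_le₀ hk hy)

theorem add_pow_mul_Gamma_le_exp_mul_Gamma_add {x : ℝ} (hx : 1 ≤ x) (k : ℕ) :
    (x + k) ^ k * Gamma x ≤ exp k * Gamma (x + k) := by
  induction k with
  | zero => simp
  | succ k ih =>
    have hxk : 0 < x + k := by positivity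
    have hexp : (1 + (x + k)⁻¹) ^ (k + 1) ≤ exp 1 :=
      one_add_inv_pow_le_exp_one (by push_cast; linarith)
    rw [Nat.cast_succ, ← add_assoc, Gamma_add_one hxk.ne', exp_add]
    calc (x + k + 1) ^ (k + 1) * Gamma x
        = (x + k) * (1 + (x + k)⁻¹) ^ (k + 1) * ((x + k) ^ k * Gamma x) := by
          rw [show x + k + 1 = (x + k) * (1 + (x + k)⁻¹) by field_simp, mul_pow]
          ring
      _ ≤ (x + k) * exp 1 * (exp k * Gamma (x + k)) := by gcongr
      _ = exp k * exp 1 * ((x + k) * Gamma (x + k)) := by ring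

theorem natCast_pow_mul_Gamma_sub_le_exp_mul_Gamma {x : ℝ} (hx : x ≤ 0) {m k : ℕ} (hk : k < m) :
    (m : ℝ) ^ k * Gamma (m - k - x) ≤ exp k * Gamma (m - x) := by
  have hkm : (k : ℝ) + 1 ≤ m := by exact_mod_cast hk
  have hΓ : 0 < Gamma (m - k - x) := Gamma_pos_of_pos (by linarith)
  calc (m : ℝ) ^ k * Gamma (m - k - x) ≤ (m - k - x + k) ^ k * Gamma (m - k - x) := by
        gcongr
        linarith
    _ ≤ exp k * Gamma (m - k - x + k) := add_pow_mul_Gamma_le_exp_mul_Gamma_add (by linarith) k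
    _ = exp k * Gamma (m - x) := by ring_nf

theorem natCast_add_const_isEquivalent (x : ℝ) :
    (fun n : ℕ ↦ (n : ℝ) + x) ~[atTop] fun n ↦ (n : ℝ) :=
  IsEquivalent.refl.add_const_of_norm_tendsto_atTop
    (tendsto_norm_atTop_atTop.comp tendsto_natCast_atTop_atTop)

theorem Gamma_natCast_add_isEquivalent_of_pos {x : ℝ} (hx : 0 < x) :
    (fun n : ℕ ↦ Gamma (n + x)) ~[atTop] fun n ↦ Gamma n * (n : ℝ) ^ x := by
  have hΓ : Gamma x ≠ 0 := (Gamma_pos_of_pos hx).ne'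
  have hlim : Tendsto (fun n : ℕ ↦ GammaSeq x n / Gamma x / (n / (n + x))) atTop (nhds 1) := by
    simpa [hΓ, Pi.div_def] using ((GammaSeq_tendsto_Gamma x).div_const (Gamma x)).div
      (tendsto_natCast_div_add_atTop x) one_ne_zero
  refine (isEquivalent_of_tendsto_one (hlim.congr' ?_)).symm
  filter_upwards [eventually_ge_atTop 1] with n hn
  have hn' : (0 : ℝ) < n := by exact_mod_cast hn
  have hfact : (n.factorial : ℝ) = n * Gamma n := by
    rw [← Gamma_nat_eq_factorial, Gamma_add_one hn'.ne']
  have hprod : ∏ j ∈ Finset.range n, (x + j) ≠ 0 :=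
    (Finset.prod_pos fun j _ ↦ by positivity).ne'
  have hpole (k : ℕ) : x ≠ -k := by linarith [k.cast_nonneg (α := ℝ)]
  rw [Pi.div_apply, add_comm (n : ℝ) x, Gamma_add_natCast hpole, GammaSeq,
    Finset.prod_range_succ, hfact]
  field_simp [hprod]

theorem Gamma_natCast_add_isEquivalent (x : ℝ) :
    (fun n : ℕ ↦ Gamma (n + x)) ~[atTop] fun n ↦ Gamma n * (n : ℝ) ^ x := by
  obtain ⟨N, hN⟩ := exists_nat_gt (-x)
  induction N generalizing x with
  | zero => exact Gamma_natCast_add_isEquivalent_of_pos (by simpa using hN)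
  | succ N ih =>
    have hx : -(x + 1) < N := by
      push_cast at hN
      linarith
    have hratio := (ih (x + 1) hx).div (natCast_add_const_isEquivalent x)
    refine (hratio.congr_left ?_).congr_right ?_
    · filter_upwards [(tendsto_natCast_atTop_atTop (R := ℝ)).eventually_gt_atTop (-x)] with n hn
      have hnx : (n : ℝ) + x ≠ 0 := by linarith
      rw [Pi.div_apply, ← add_assoc, Gamma_add_one hnx, mul_div_cancel_left₀ _ hnx]
    · filter_upwards [eventually_ne_atTop 0] with n hn
      rw [Pi.div_apply, rpow_add_one (Nat.cast_ne_zero.mpr hn)]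
      field_simp

theorem jacobiDelta_isEquivalent (β γ : ℝ) :
    jacobiDelta β γ ~[atTop] fun n ↦ √(2 / n) / Gamma n := by
  have hlin : (fun n : ℕ ↦ 2 * ((n : ℝ) + (β + γ + 1) / 2)) ~[atTop] fun n ↦ 2 * (n : ℝ) :=
    IsEquivalent.refl.mul (natCast_add_const_isEquivalent _)
  have hsq := (hlin.mul (Gamma_natCast_add_isEquivalent (β + γ + 1))).div
    (((Gamma_natCast_add_isEquivalent 1).mul (Gamma_natCast_add_isEquivalent (β + 1))).mul
      (Gamma_natCast_add_isEquivalent (γ + 1)))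
  have hnonneg : ∀ n : ℕ, 0 ≤ 2 / (n * Gamma n ^ 2) := fun n ↦ by positivity
  have hsq' : (fun n : ℕ ↦ (β + γ + 2 * n + 1) * Gamma (β + γ + n + 1) /
      (n.factorial * Gamma (β + n + 1) * Gamma (γ + n + 1))) ~[atTop]
      fun n ↦ 2 / (n * Gamma n ^ 2) := by
    refine (hsq.congr_left (.of_forall fun n ↦ ?_)).congr_right ?_
    · simp only [← Gamma_nat_eq_factorial, Pi.mul_apply, Pi.div_apply]
      ring_nf
    · filter_upwards [eventually_gt_atTop 0] with n hn
      have hn' : (0 : ℝ) < n := by exact_mod_cast hn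
      have hΓ : Gamma n ≠ 0 := (Gamma_pos_of_pos hn').ne'
      simp only [Pi.mul_apply, Pi.div_apply]
      rw [show β + γ + 1 = β + 1 + γ by ring, rpow_add_one hn'.ne' γ, rpow_add hn', rpow_one]
      field_simp [hΓ]
  refine ((hsq'.rpow hnonneg (r := 1 / 2)).congr_left (.of_forall fun n ↦ ?_)).congr_right
    (.of_forall fun n ↦ ?_)
  · exact (sqrt_eq_rpow _).symm
  · have hΓ : 0 ≤ Gamma n := Gamma_nonneg_of_nonneg n.cast_nonneg
    rw [Pi.pow_apply, ← sqrt_eq_rpow, ← div_div, sqrt_div' _ (sq_nonneg _), sqrt_sq hΓ]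

theorem prod_Icc_natCast_sub_sub (x : ℝ) (n : ℕ) :
    ∏ i ∈ Finset.Icc 1 n, ((n : ℝ) - x - i) = ∏ j ∈ Finset.range n, (-x + j) := by
  refine Finset.prod_nbij' (n - ·) (n - ·) ?_ ?_ ?_ ?_ ?_ <;>
    simp only [Finset.mem_Icc, Finset.mem_range]
  any_goals omega
  rintro i ⟨-, hi⟩
  rw [Nat.cast_sub hi]
  ring

theorem Imk_eq_Gamma_ratio {α : ℝ} (hα : ∀ n : ℕ, α ≠ n) (β γ : ℝ) {m k : ℕ} (hk : k ≤ m) :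
    Imk α β γ m k = jacobiDelta β γ m * Gamma (m + (β + 1)) *
      (Gamma (m - k - α) / Gamma (-α)) / Gamma (m + (α + β + γ + 2) + k) := by
  have hpole (n : ℕ) : -α ≠ -n := neg_injective.ne (hα n)
  have hprod : ∏ i ∈ Finset.Icc 1 (m - k), ((m : ℝ) - k - α - i) =
      Gamma (m - k - α) / Gamma (-α) := by
    rw [eq_div_iff (Gamma_ne_zero hpole), ← Nat.cast_sub hk, prod_Icc_natCast_sub_sub,
      ← Gamma_add_natCast hpole]
    ring_nf
  rw [Imk, hprod]
  ring_nf

theorem Imk_zero_isEquivalent {α : ℝ} (hα : ∀ n : ℕ, α ≠ n) (β γ : ℝ) :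
    (fun m ↦ Imk α β γ m 0) ~[atTop]
      fun m ↦ √2 / Gamma (-α) * (m : ℝ) ^ (-2 * α - γ - 3 / 2) := by
  have hΓα : (fun m : ℕ ↦ Gamma (m + -α) / Gamma (-α)) ~[atTop]
      fun m ↦ Gamma m * (m : ℝ) ^ (-α) / Gamma (-α) :=
    (Gamma_natCast_add_isEquivalent (-α)).div .refl
  have hratio := (((jacobiDelta_isEquivalent β γ).mul
    (Gamma_natCast_add_isEquivalent (β + 1))).mul hΓα).div
    (Gamma_natCast_add_isEquivalent (α + β + γ + 2))
  refine (hratio.congr_left (.of_forall fun m ↦ ?_)).congr_right ?_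
  · simp [Imk_eq_Gamma_ratio hα β γ m.zero_le, sub_eq_add_neg]
  · filter_upwards [eventually_gt_atTop 0] with m hm
    have hm' : (0 : ℝ) < m := by exact_mod_cast hm
    have hΓ : Gamma m ≠ 0 := (Gamma_pos_of_pos hm').ne'
    simp only [Pi.mul_apply, Pi.div_apply]
    rw [show -2 * α - γ - 3 / 2 = β + 1 + -α - (α + β + γ + 2) - 1 / 2 by ring, rpow_sub hm',
      rpow_sub hm', rpow_add hm' (β + 1), ← sqrt_eq_rpow, sqrt_div' _ hm'.le]
    field_simp [hΓ]

theorem Imk_le_mul_Imk_zero {α β γ : ℝ} (hα : α < 0) (hβ : -2 < β) (hαβγ : -3 < α + β + γ)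
    {m k : ℕ} (hk : k < m) :
    Imk α β γ m k ≤
      (min 1 (α + β + γ + 3))⁻¹ * (exp k / m ^ (2 * k)) * Imk α β γ m 0 := by
  obtain ⟨s, hs⟩ : ∃ s, s = α + β + γ + 2 := ⟨_, rfl⟩
  rw [show α + β + γ + 3 = s + 1 by linarith]
  have hkm : (k : ℝ) + 1 ≤ m := by exact_mod_cast hk
  have hm : (1 : ℝ) ≤ m := by linarith [k.cast_nonneg (α := ℝ)]
  have hα' (n : ℕ) : α ≠ n := (hα.trans_le n.cast_nonneg).ne
  have hc : 0 < min 1 (s + 1) := lt_min one_pos (by linarith)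
  have hδ : 0 ≤ jacobiDelta β γ m := sqrt_nonneg _
  have hΓα : 0 < Gamma (-α) := Gamma_pos_of_pos (by linarith)
  have hΓβ : 0 < Gamma (m + (β + 1)) := Gamma_pos_of_pos (by linarith)
  have hΓs : 0 < Gamma (m + s) := Gamma_pos_of_pos (by linarith)
  have hΓm : 0 < Gamma (m - α) := Gamma_pos_of_pos (by linarith)
  rw [Imk_eq_Gamma_ratio hα' β γ hk.le, Imk_eq_Gamma_ratio hα' β γ m.zero_le, ← hs]
  calc jacobiDelta β γ m * Gamma (m + (β + 1)) * (Gamma (m - k - α) / Gamma (-α)) /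
        Gamma (m + s + k)
      ≤ jacobiDelta β γ m * Gamma (m + (β + 1)) * (exp k * Gamma (m - α) / m ^ k / Gamma (-α)) /
        (min 1 (s + 1) * m ^ k * Gamma (m + s)) := by
        gcongr
        · rw [le_div_iff₀' (by positivity)]
          exact natCast_pow_mul_Gamma_sub_le_exp_mul_Gamma hα.le hk
        · exact min_one_mul_pow_mul_Gamma_le_Gamma_add (by linarith) hm k
    _ = (min 1 (s + 1))⁻¹ * (exp k / m ^ (2 * k)) * (jacobiDelta β γ m * Gamma (m + (β + 1)) *
        (Gamma (m - (0 : ℕ) - α) / Gamma (-α)) / Gamma (m + s + (0 : ℕ))) := by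
        rw [two_mul, pow_add, Nat.cast_zero, sub_zero, add_zero]
        field_simp

theorem stmt4_general {α β γ : ℝ} (hα : α < 0) (hβ : -2 < β) (hαβγ : -3 < α + β + γ) :
    ∃ C : ℝ, 0 < C ∧ ∀ m k : ℕ, k < m →
      Imk α β γ m k ≤ C * exp k * (m : ℝ) ^ (-2 * α - γ - 3 / 2 - 2 * k) := by
  have hα' (n : ℕ) : α ≠ n := (hα.trans_le n.cast_nonneg).ne
  obtain ⟨A, hA, hI⟩ := bound_of_isBigO_nat_atTop
    ((Imk_zero_isEquivalent hα' β γ).isBigO.trans (isBigO_const_mul_self _ _ _))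
  set c := min 1 (α + β + γ + 3)
  have hc : 0 < c := lt_min one_pos (by linarith)
  refine ⟨c⁻¹ * A, by positivity, fun m k hk ↦ ?_⟩
  have hm : (0 : ℝ) < m := by exact_mod_cast k.zero_le.trans_lt hk
  have hI0 : Imk α β γ m 0 ≤ A * m ^ (-2 * α - γ - 3 / 2) := by
    have hpow : (0 : ℝ) < m ^ (-2 * α - γ - 3 / 2) := rpow_pos_of_pos hm _
    simpa only [norm_of_nonneg hpow.le] using (le_norm_self _).trans (hI hpow.ne')
  have hpow_sub : (m : ℝ) ^ (-2 * α - γ - 3 / 2 - 2 * k) =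
      m ^ (-2 * α - γ - 3 / 2) / m ^ (2 * k) := by
    rw [← rpow_sub_natCast hm.ne', Nat.cast_mul, Nat.cast_ofNat]
  calc Imk α β γ m k ≤ c⁻¹ * (exp k / m ^ (2 * k)) * Imk α β γ m 0 :=
        Imk_le_mul_Imk_zero hα hβ hαβγ hk
    _ ≤ c⁻¹ * (exp k / m ^ (2 * k)) * (A * m ^ (-2 * α - γ - 3 / 2)) := by gcongr
    _ = c⁻¹ * A * exp k * m ^ (-2 * α - γ - 3 / 2 - 2 * k) := by
      rw [hpow_sub]
      ring

theorem stmt4 (α β γ : ℝ) (hβ : -1 < β) (hγ : -1 < γ) (hα : α ∈ Set.Ioo (-1 : ℝ) 0) :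
    ∃ C : ℝ, 0 < C ∧ ∀ m k : ℕ, 1 ≤ m → k ≤ m - 1 →
      Imk α β γ m k ≤ C * Real.exp (2 * k) *
        (m : ℝ) ^ (2 * Real.eulerMascheroniConstant - 2 * α - γ - 5 / 2 - 2 * k) := by
  obtain ⟨C, hC, hI⟩ := stmt4_general (β := β) (γ := γ) hα.2 (by linarith) (by linarith [hα.1])
  refine ⟨C, hC, fun m k hm hk ↦ (hI m k (by omega)).trans ?_⟩
  have hm' : (1 : ℝ) ≤ m := by exact_mod_cast hm
  gcongr C * exp ?_ * _ ^ ?_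
  · linarith [k.cast_nonneg (α := ℝ)]
  · linarith [one_half_lt_eulerMascheroniConstant]
end

section
/- Let γ > -1. For every positive integer η there exists N such that for all integers k > N: d_{k+1}(η) < d_k(η), i.e. the sequence (d_k(η))_k is eventually strictly decreasing. -/
open Real MeasureTheory Set Filter

open Asymptotics


/-- `d_k(η) = η^k·Σ_{i=0}^k 2^i/(i!·(k-i)!·Γ(γ+i+1))`. -/
noncomputable def dSeq (γ : ℝ) (η : ℕ) (k : ℕ) : ℝ :=
  (η : ℝ) ^ k * ∑ i ∈ Finset.range (k + 1),
    (2 : ℝ) ^ i / (i.factorial * (k - i).factorial * Real.Gamma (γ + i + 1))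

/-!
Write `d_k(η) = η ^ k * S_k`. The sums `S_k` are the coefficients of `F = C * exp`, where
`C = ∑ (2 t) ^ i / (i! Γ(γ + i + 1))`. Since `F' = (C + C') * exp` and the recurrence of `Γ` bounds
the coefficients of `C'` by `2 / (γ + 1)` times those of `C`, comparing coefficients gives
`(k + 1) S_{k+1} ≤ (1 + 2 / (γ + 1)) S_k`. Hence `d_{k+1}(η) / d_k(η) = O(1 / k)`.
-/

open PowerSeries

section ExpMultiple

theorem succ_mul_coeff_succ_mul_exp {R : Type*} [CommRing R] [Algebra ℚ R] (f : R⟦X⟧) (k : ℕ) :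
    ((k : R) + 1) * coeff (k + 1) (f * exp R) = coeff k ((f + derivative R f) * exp R) := by
  have leibniz : derivative R (f * exp R) = (f + derivative R f) * exp R := by
    rw [Derivation.leibniz, derivative_exp, smul_eq_mul, smul_eq_mul]
    ring
  rw [← leibniz, coeff_derivative, mul_comm]

theorem coeff_mul_exp {K : Type*} [Field K] [CharZero K] (f : K⟦X⟧) (k : ℕ) :
    coeff k (f * exp K) = ∑ i ∈ Finset.range (k + 1), coeff i f / (k - i).factorial := by
  rw [coeff_mul, Finset.Nat.sum_antidiagonal_eq_sum_range_succ
    (fun i j => coeff i f * coeff j (exp K))]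
  simp [coeff_exp, div_eq_mul_inv]

variable {K : Type*} [Field K] [LinearOrder K] [IsStrictOrderedRing K] {f g : K⟦X⟧}

theorem coeff_mul_exp_le_coeff_mul_exp (h : ∀ i, coeff i f ≤ coeff i g) (k : ℕ) :
    coeff k (f * exp K) ≤ coeff k (g * exp K) := by
  rw [coeff_mul_exp, coeff_mul_exp]
  gcongr with i
  exact h i

theorem coeff_mul_exp_pos (h₀ : 0 < coeff 0 f) (h : ∀ i, 0 ≤ coeff i f) (k : ℕ) :
    0 < coeff k (f * exp K) := by
  rw [coeff_mul_exp]
  refine Finset.sum_pos' (fun i _ => div_nonneg (h i) (by positivity)) ⟨0, by simp, ?_⟩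
  exact div_pos h₀ (by positivity)

theorem succ_mul_coeff_succ_mul_exp_le {c : K}
    (h : ∀ i, coeff i (derivative K f) ≤ c * coeff i f) (k : ℕ) :
    ((k : K) + 1) * coeff (k + 1) (f * exp K) ≤ (1 + c) * coeff k (f * exp K) := by
  have coeff_le (i : ℕ) : coeff i (f + derivative K f) ≤ coeff i ((1 + c) • f) := by
    rw [map_add, coeff_smul, smul_eq_mul, add_mul, one_mul]
    exact add_le_add_right (h i) _
  calc ((k : K) + 1) * coeff (k + 1) (f * exp K)
      = coeff k ((f + derivative K f) * exp K) := succ_mul_coeff_succ_mul_exp f k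
    _ ≤ coeff k ((1 + c) • f * exp K) := coeff_mul_exp_le_coeff_mul_exp coeff_le k
    _ = (1 + c) * coeff k (f * exp K) := by
      rw [smul_mul_assoc, coeff_smul, smul_eq_mul]

end ExpMultiple

theorem exists_pow_mul_succ_lt_of_succ_mul_le {K : Type*} [Field K] [LinearOrder K]
    [IsStrictOrderedRing K] [Archimedean K] {a : ℕ → K} {c η : K} (hη : 0 < η)
    (ha : ∀ k, 0 < a k) (h : ∀ k : ℕ, ((k : K) + 1) * a (k + 1) ≤ c * a k) :
    ∃ N : ℕ, ∀ k, N < k → η ^ (k + 1) * a (k + 1) < η ^ k * a k := by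
  obtain ⟨N, hN⟩ := exists_nat_gt (η * c)
  refine ⟨N, fun k hk => ?_⟩
  have ratio_lt : η * c < (k : K) + 1 := by
    have : (N : K) < k := Nat.cast_lt.mpr hk
    linarith
  have step : η * a (k + 1) < a k := by
    refine lt_of_mul_lt_mul_left (a := (k : K) + 1) ?_ (by positivity)
    calc ((k : K) + 1) * (η * a (k + 1)) = η * (((k : K) + 1) * a (k + 1)) := by ring
      _ ≤ η * (c * a k) := mul_le_mul_of_nonneg_left (h k) hη.le
      _ = η * c * a k := by ring
      _ < ((k : K) + 1) * a k := mul_lt_mul_of_pos_right ratio_lt (ha k)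
  rw [pow_succ, mul_assoc]
  exact mul_lt_mul_of_pos_left step (pow_pos hη k)

/-- The series in `t` of the Bessel–Clifford function `C_γ(x t)`, whose product with `exp` generates
the sums `laguerreSum γ x k`. -/
noncomputable def besselClifford (γ x : ℝ) : ℝ⟦X⟧ :=
  PowerSeries.mk fun i => x ^ i / (i.factorial * Real.Gamma (γ + i + 1))

/-- The generalized Laguerre polynomial normalized as `L_k^{(γ)}(-x) / Γ(γ + k + 1)`, so that
`dSeq γ η k = η ^ k * laguerreSum γ 2 k`. -/
noncomputable def laguerreSum (γ x : ℝ) (k : ℕ) : ℝ :=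
  ∑ i ∈ Finset.range (k + 1), x ^ i / (i.factorial * (k - i).factorial * Real.Gamma (γ + i + 1))

theorem coeff_besselClifford_mul_exp (γ x : ℝ) (k : ℕ) :
    coeff k (besselClifford γ x * exp ℝ) = laguerreSum γ x k := by
  rw [coeff_mul_exp, laguerreSum]
  refine Finset.sum_congr rfl fun i _ => ?_
  rw [besselClifford, coeff_mk, div_div, mul_right_comm]

theorem coeff_derivative_besselClifford {γ : ℝ} (x : ℝ) {i : ℕ} (hi : γ + i + 1 ≠ 0) :
    coeff i (derivative ℝ (besselClifford γ x)) =
      x / (γ + i + 1) * coeff i (besselClifford γ x) := by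
  have gamma_succ :
      Real.Gamma (γ + (i + 1 : ℕ) + 1) = (γ + i + 1) * Real.Gamma (γ + i + 1) := by
    rw [← Real.Gamma_add_one hi, Nat.cast_succ, ← add_assoc γ]
  rw [coeff_derivative, besselClifford, coeff_mk, coeff_mk, gamma_succ, Nat.factorial_succ]
  push_cast
  field_simp
  ring

section GammaGtNegOne

variable {γ x : ℝ}

theorem coeff_zero_besselClifford_pos (hγ : -1 < γ) (x : ℝ) : 0 < coeff 0 (besselClifford γ x) := by
  have gamma_pos : 0 < Real.Gamma (γ + 1) := Real.Gamma_pos_of_pos (by linarith)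
  simpa [besselClifford] using gamma_pos

theorem coeff_besselClifford_nonneg (hγ : -1 < γ) (hx : 0 ≤ x) (i : ℕ) :
    0 ≤ coeff i (besselClifford γ x) := by
  have gamma_pos : 0 < Real.Gamma (γ + i + 1) :=
    Real.Gamma_pos_of_pos (by linarith [i.cast_nonneg (α := ℝ)])
  rw [besselClifford, coeff_mk]
  positivity

theorem coeff_derivative_besselClifford_le (hγ : -1 < γ) (hx : 0 ≤ x) (i : ℕ) :
    coeff i (derivative ℝ (besselClifford γ x)) ≤
      x / (γ + 1) * coeff i (besselClifford γ x) := by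
  have pos : 0 < γ + 1 := by linarith
  have le : γ + 1 ≤ γ + i + 1 := by linarith [i.cast_nonneg (α := ℝ)]
  rw [coeff_derivative_besselClifford x (pos.trans_le le).ne']
  exact mul_le_mul_of_nonneg_right (div_le_div_of_nonneg_left hx pos le)
    (coeff_besselClifford_nonneg hγ hx i)

theorem laguerreSum_pos (hγ : -1 < γ) (hx : 0 ≤ x) (k : ℕ) : 0 < laguerreSum γ x k := by
  rw [← coeff_besselClifford_mul_exp]
  exact coeff_mul_exp_pos (coeff_zero_besselClifford_pos hγ x)
    (coeff_besselClifford_nonneg hγ hx) k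

theorem succ_mul_laguerreSum_succ_le (hγ : -1 < γ) (hx : 0 ≤ x) (k : ℕ) :
    ((k : ℝ) + 1) * laguerreSum γ x (k + 1) ≤ (1 + x / (γ + 1)) * laguerreSum γ x k := by
  simp only [← coeff_besselClifford_mul_exp]
  exact succ_mul_coeff_succ_mul_exp_le (coeff_derivative_besselClifford_le hγ hx) k

theorem stmt5_general {η : ℝ} (hγ : -1 < γ) (hx : 0 ≤ x) (hη : 0 < η) :
    ∃ N : ℕ, ∀ k : ℕ, N < k →
      η ^ (k + 1) * laguerreSum γ x (k + 1) < η ^ k * laguerreSum γ x k :=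
  exists_pow_mul_succ_lt_of_succ_mul_le hη (laguerreSum_pos hγ hx)
    (succ_mul_laguerreSum_succ_le hγ hx)

end GammaGtNegOne

theorem stmt5 (γ : ℝ) (hγ : -1 < γ) :
    ∀ η : ℕ, 0 < η → ∃ N : ℕ, ∀ k : ℕ, N < k → dSeq γ η (k + 1) < dSeq γ η k :=
  fun _ hη => stmt5_general hγ zero_le_two (Nat.cast_pos.mpr hη)
end

section
/- Suppose β,γ ∈ [-1/2,1/2], α ∈ (-1,0), and (f_n)_{n≥0} is a real sequence such that Σ_{n=0}^∞ |f_n|·c_n < ∞. Then there exists a constant C > 0 such that for all integers m ≥ 1: Σ_{n=0}^∞ |f_n·A^{α,γ,β}_{mn}| ≤ C·m^{-2α-γ-3/2}. -/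
open Real MeasureTheory Set Filter

open Asymptotics

/-!
Everything rests on the asymptotics `Γ (a + m + 1) ~ m ^ a * m!`, valid for every real `a`. It gives
`δ'_m = O(m ^ (1 / 2) / m!)` and `B(s, c + m + 1) = O(m ^ (-s))`. The bound on the Beta factors is
uniform in `k` because `x ↦ B(x, y)` decreases along unit steps in `x > 0`. The reciprocal Gamma
factors satisfy `1 / Γ (k + α - m + 1) = O(m ^ (-α - 1) * m!)`, also uniformly in `k`: to the left
of `0` by the reflection formula, to the right because `Γ` is bounded away from `0` there. So all
dependence on `m` is the claimed power, and it remains to see that `∑ k ≤ n, |C̃_n^k|` is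
`O(n! * Γ (n + β + 1) * Γ (n + γ + 1) / 4 ^ n)`. The sum is at most exponential in `n` times the two
Gamma values, and `n!` beats any exponential.
-/

section Gamma

lemma isEquivalent_const_add_natCast (c : ℝ) :
    (fun m : ℕ => c + m) ~[atTop] fun m : ℕ => (m : ℝ) := by
  refine IsEquivalent.symm (isEquivalent_of_tendsto_one ?_)
  simpa only [add_comm c, Pi.div_def] using tendsto_natCast_div_add_atTop c

lemma Gamma_add_natCast_add_one_eq_prod {s : ℝ} (hs : 0 < s) (n : ℕ) :
    Gamma (s + n + 1) = (∏ j ∈ Finset.range (n + 1), (s + j)) * Gamma s := by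
  induction n with
  | zero => simp [Gamma_add_one hs.ne']
  | succ n ih =>
    rw [Finset.prod_range_succ, Gamma_add_one (by positivity), Nat.cast_succ, ← add_assoc, ih]
    ring

lemma isEquivalent_Gamma_add_natCast_of_pos {a : ℝ} (ha : 0 < a) :
    (fun m : ℕ => Gamma (a + m + 1)) ~[atTop] fun m : ℕ => (m : ℝ) ^ a * m.factorial := by
  have hΓ : Gamma a ≠ 0 := (Gamma_pos_of_pos ha).ne'
  refine isEquivalent_of_tendsto_one ?_
  have heuler := (tendsto_const_nhds (x := Gamma a)).div (GammaSeq_tendsto_Gamma a) hΓ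
  rw [div_self hΓ] at heuler
  refine heuler.congr fun m => ?_
  simp only [Pi.div_apply, GammaSeq, Gamma_add_natCast_add_one_eq_prod ha, div_div_eq_mul_div,
    mul_comm]

lemma isEquivalent_Gamma_add_natCast_of_add_one {a : ℝ}
    (h : (fun m : ℕ => Gamma (a + 1 + m + 1)) ~[atTop]
      fun m : ℕ => (m : ℝ) ^ (a + 1) * m.factorial) :
    (fun m : ℕ => Gamma (a + m + 1)) ~[atTop] fun m : ℕ => (m : ℝ) ^ a * m.factorial := by
  refine ((h.div (isEquivalent_const_add_natCast (a + 1))).congr_left ?_).congr_right ?_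
  · filter_upwards [eventually_gt_atTop ⌈|a|⌉₊] with m hm
    have hne : a + 1 + m ≠ 0 := by linarith [Nat.lt_of_ceil_lt hm, neg_abs_le a]
    rw [Pi.div_apply, Gamma_add_one hne, mul_div_cancel_left₀ _ hne, add_right_comm]
  · filter_upwards [eventually_gt_atTop 0] with m hm
    have hm' : (m : ℝ) ≠ 0 := by positivity
    rw [Pi.div_apply, rpow_add_one hm']
    field_simp

lemma isEquivalent_Gamma_add_natCast (a : ℝ) :
    (fun m : ℕ => Gamma (a + m + 1)) ~[atTop] fun m : ℕ => (m : ℝ) ^ a * m.factorial := by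
  obtain ⟨N, hN⟩ := exists_nat_gt (-a)
  induction N generalizing a with
  | zero => exact isEquivalent_Gamma_add_natCast_of_pos (by simpa using hN)
  | succ N ih =>
    exact isEquivalent_Gamma_add_natCast_of_add_one (ih (a + 1) (by push_cast at hN; linarith))

lemma exists_pos_forall_le_Gamma : ∃ c : ℝ, 0 < c ∧ ∀ x : ℝ, 0 < x → c ≤ Gamma x := by
  obtain ⟨x₀, hx₀, hmin⟩ := exists_isMinOn_Gamma_Ioi
  exact ⟨Gamma x₀, Gamma_pos_of_pos (by linarith [hx₀.1]), fun x hx => hmin hx⟩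

lemma one_isBigO_rpow_mul_factorial (a : ℝ) :
    (fun _ : ℕ => (1 : ℝ)) =O[atTop] fun m : ℕ => (m : ℝ) ^ a * m.factorial := by
  obtain ⟨c, hc, hle⟩ := exists_pos_forall_le_Gamma
  refine IsBigO.trans (.of_bound c⁻¹ ?_) (isEquivalent_Gamma_add_natCast a).isBigO
  filter_upwards [eventually_gt_atTop ⌈|a|⌉₊] with m hm
  have hΓ : c ≤ Gamma (a + m + 1) := hle _ (by linarith [Nat.lt_of_ceil_lt hm, neg_abs_le a])
  rw [norm_one, norm_of_nonneg (hc.le.trans hΓ), inv_mul_eq_div, one_le_div hc]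
  exact hΓ

lemma Gamma_le_Gamma_add_natCast {x : ℝ} (hx : 1 ≤ x) (k : ℕ) : Gamma x ≤ Gamma (x + k) := by
  induction k with
  | zero => simp
  | succ k ih =>
    have hxk : 1 ≤ x + k := le_add_of_le_of_nonneg hx k.cast_nonneg
    rw [Nat.cast_succ, ← add_assoc, Gamma_add_one (by linarith)]
    exact ih.trans (le_mul_of_one_le_left (Gamma_pos_of_pos (by linarith)).le hxk)

lemma abs_inv_Gamma_le_Gamma_one_sub {x : ℝ} (hx : x < 1) : |(Gamma x)⁻¹| ≤ Gamma (1 - x) := by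
  have hpos : 0 < Gamma (1 - x) := Gamma_pos_of_pos (by linarith)
  rcases eq_or_ne (Gamma x) 0 with hzero | hne
  · simpa [hzero] using hpos.le
  have hreflection := Gamma_mul_Gamma_one_sub x
  have hsin : sin (π * x) ≠ 0 := by
    intro hsin
    rw [hsin, div_zero] at hreflection
    exact mul_ne_zero hne hpos.ne' hreflection
  have hone : 1 ≤ |Gamma x| * Gamma (1 - x) := by
    rw [← abs_of_pos hpos, ← abs_mul, hreflection, abs_div, abs_of_pos pi_pos,
      one_le_div (abs_pos.2 hsin)]
    linarith [abs_sin_le_one (π * x), pi_gt_three]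
  rw [abs_inv]
  exact inv_le_of_inv_le₀ hpos (by rwa [inv_le_iff_one_le_mul₀ hpos])

lemma exists_abs_inv_Gamma_add_sub_le (α : ℝ) :
    ∃ C : ℝ, 0 < C ∧ ∀ m k : ℕ, 1 ≤ m →
      |(Gamma (k + α - m + 1))⁻¹| ≤ C * ((m : ℝ) ^ (-α - 1) * m.factorial) := by
  obtain ⟨c, hc, hle⟩ := exists_pos_forall_le_Gamma
  obtain ⟨C₁, hC₁, hone⟩ := bound_of_isBigO_nat_atTop (one_isBigO_rpow_mul_factorial (-α - 1))
  obtain ⟨C₂, hC₂, hΓ⟩ := bound_of_isBigO_nat_atTop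
    (isEquivalent_Gamma_add_natCast (-α - 1)).isBigO
  refine ⟨c⁻¹ * C₁ + C₂, by positivity, fun m k hm => ?_⟩
  have hm₀ : (0 : ℝ) < m := by exact_mod_cast hm
  have hR : 0 < (m : ℝ) ^ (-α - 1) * m.factorial := by positivity
  replace hone := hone hR.ne'
  replace hΓ := hΓ hR.ne'
  rw [norm_of_nonneg hR.le] at hone hΓ
  rw [norm_one] at hone
  rw [add_mul]
  rcases lt_or_ge 0 (k + α - m + 1) with hpos | hneg
  · refine le_add_of_le_of_nonneg ?_ (by positivity)
    rw [abs_inv, abs_of_pos (Gamma_pos_of_pos hpos), mul_assoc]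
    calc (Gamma (k + α - m + 1))⁻¹ ≤ c⁻¹ := inv_anti₀ hc (hle _ hpos)
      _ ≤ c⁻¹ * (C₁ * ((m : ℝ) ^ (-α - 1) * m.factorial)) :=
          le_mul_of_one_le_right (by positivity) hone
  · refine le_add_of_nonneg_of_le (by positivity) ?_
    calc |(Gamma (k + α - m + 1))⁻¹|
        ≤ Gamma (1 - (k + α - m + 1)) := abs_inv_Gamma_le_Gamma_one_sub (by linarith)
      _ ≤ Gamma (1 - (k + α - m + 1) + k) := Gamma_le_Gamma_add_natCast (by linarith) k
      _ = Gamma (-α - 1 + m + 1) := by ring_nf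
      _ ≤ C₂ * ((m : ℝ) ^ (-α - 1) * m.factorial) := (le_abs_self _).trans hΓ

end Gamma

section Beta

lemma betaB_nonneg {x y : ℝ} (hx : 0 < x) (hy : 0 < y) : 0 ≤ betaB x y :=
  div_nonneg (mul_pos (Gamma_pos_of_pos hx) (Gamma_pos_of_pos hy)).le
    (Gamma_pos_of_pos (add_pos hx hy)).le

lemma betaB_add_one_left {x y : ℝ} (hx : x ≠ 0) (hxy : x + y ≠ 0) :
    betaB (x + 1) y = x / (x + y) * betaB x y := by
  rw [betaB, betaB, add_right_comm, Gamma_add_one hx, Gamma_add_one hxy, mul_assoc,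
    mul_div_mul_comm]

lemma betaB_add_natCast_left_le {x y : ℝ} (hx : 0 < x) (hy : 0 < y) (k : ℕ) :
    betaB (x + k) y ≤ betaB x y := by
  induction k with
  | zero => simp
  | succ k ih =>
    have hxk : 0 < x + k := by positivity
    rw [Nat.cast_succ, ← add_assoc, betaB_add_one_left hxk.ne' (by positivity)]
    exact (mul_le_of_le_one_left (betaB_nonneg hxk hy)
      (div_le_one_of_le₀ (by linarith) (by positivity))).trans ih

lemma abs_betaB_add_natCast_left_le {s y : ℝ} (hs : -1 < s) (hy : 0 < y) (k : ℕ) :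
    |betaB (s + k) y| ≤ |betaB s y| + |betaB (s + 1) y| := by
  rcases k with _ | k
  · simp
  · have hs₁ : 0 < s + 1 := by linarith
    rw [Nat.cast_succ, add_comm (k : ℝ) 1, ← add_assoc,
      abs_of_nonneg (betaB_nonneg (by positivity) hy)]
    exact le_add_of_nonneg_of_le (abs_nonneg _)
      ((betaB_add_natCast_left_le hs₁ hy k).trans (le_abs_self _))

lemma betaB_isBigO_rpow_neg (s c : ℝ) :
    (fun m : ℕ => betaB s (c + m + 1)) =O[atTop] fun m : ℕ => (m : ℝ) ^ (-s) := by
  have hratio := ((isEquivalent_Gamma_add_natCast c).div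
    (isEquivalent_Gamma_add_natCast (s + c))).isBigO.const_mul_left (Gamma s)
  refine (hratio.congr_left fun m => ?_).trans_eventuallyEq ?_
  · simp only [betaB, Pi.div_apply, mul_div_assoc, add_assoc]
  · filter_upwards [eventually_gt_atTop 0] with m hm
    have hm₀ : (0 : ℝ) < m := by exact_mod_cast hm
    rw [Pi.div_apply, rpow_add hm₀, rpow_neg hm₀.le]
    field_simp

lemma exists_abs_betaB_add_natCast_left_le {s c : ℝ} (hs : -1 < s) (hc : -1 < c) :
    ∃ C : ℝ, 0 < C ∧ ∀ m k : ℕ, 1 ≤ m →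
      |betaB (s + k) (c + m + 1)| ≤ C * (m : ℝ) ^ (-s) := by
  have hshift : (fun m : ℕ => (m : ℝ) ^ (-(s + 1))) =O[atTop] fun m : ℕ => (m : ℝ) ^ (-s) :=
    .of_norm_eventuallyLE <| by
      filter_upwards [eventually_ge_atTop 1] with m hm
      rw [norm_of_nonneg (by positivity)]
      exact rpow_le_rpow_of_exponent_le (by exact_mod_cast hm) (by linarith)
  obtain ⟨C, hC, hle⟩ := bound_of_isBigO_nat_atTop
    ((betaB_isBigO_rpow_neg s c).norm_left.add
      ((betaB_isBigO_rpow_neg (s + 1) c).trans hshift).norm_left)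
  refine ⟨C, hC, fun m k hm => ?_⟩
  have hm₀ : (0 : ℝ) < m := by exact_mod_cast hm
  have hpow : 0 < (m : ℝ) ^ (-s) := by positivity
  refine (abs_betaB_add_natCast_left_le hs (by linarith) k).trans ((le_abs_self _).trans ?_)
  simpa only [norm_eq_abs, abs_of_pos hpow] using hle hpow.ne'

end Beta

section JacobiDelta

lemma jacobiDelta_nonneg (β γ : ℝ) (n : ℕ) : 0 ≤ jacobiDelta β γ n := sqrt_nonneg _

lemma jacobiDelta_comm (β γ : ℝ) (n : ℕ) : jacobiDelta β γ n = jacobiDelta γ β n := by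
  rw [jacobiDelta, jacobiDelta, add_comm β γ, mul_right_comm]

lemma cCoef_comm (β γ : ℝ) (n : ℕ) : cCoef β γ n = cCoef γ β n := by
  rw [cCoef, cCoef, jacobiDelta_comm, mul_right_comm _ (Gamma _)]

lemma jacobiDelta_isBigO (β γ : ℝ) :
    jacobiDelta β γ =O[atTop] fun m : ℕ => (m : ℝ) ^ (1 / 2 : ℝ) / m.factorial := by
  have hlinear : (fun m : ℕ => β + γ + 2 * m + 1) ~[atTop] fun m : ℕ => 2 * (m : ℝ) := by
    refine (IsEquivalent.refl (u := fun _ : ℕ => (2 : ℝ))).mul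
      (isEquivalent_const_add_natCast ((β + γ + 1) / 2)) |>.congr_left (.of_eq ?_)
    ext m
    simp only [Pi.mul_apply]
    ring
  have hradicand := (hlinear.mul (isEquivalent_Gamma_add_natCast (β + γ))).div
    ((IsEquivalent.refl (u := fun m : ℕ => (m.factorial : ℝ))).mul
      (isEquivalent_Gamma_add_natCast β) |>.mul (isEquivalent_Gamma_add_natCast γ))
  have hsimplify : (fun m : ℕ => 2 * (m : ℝ) * ((m : ℝ) ^ (β + γ) * m.factorial) /
      (m.factorial * ((m : ℝ) ^ β * m.factorial) * ((m : ℝ) ^ γ * m.factorial))) =ᶠ[atTop]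
      fun m : ℕ => 2 * ((m : ℝ) / (m.factorial : ℝ) ^ 2) := by
    filter_upwards [eventually_gt_atTop 0] with m hm
    have hm₀ : (0 : ℝ) < m := by exact_mod_cast hm
    rw [rpow_add hm₀]
    field_simp
  have hsq := ((hradicand.isBigO.trans_eventuallyEq hsimplify).of_const_mul_right).sqrt
    (.of_forall fun m => by positivity)
  refine hsq.congr_right fun m => ?_
  rw [sqrt_div m.cast_nonneg, sqrt_sq m.factorial.cast_nonneg, sqrt_eq_rpow]

lemma exists_jacobiDelta_mul_abs_betaB_div_Gamma_le {α β γ : ℝ} (hαβ : -2 < α + β) (hγ : -1 < γ) :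
    ∃ C : ℝ, 0 < C ∧ ∀ m k : ℕ, 1 ≤ m →
      jacobiDelta β γ m * |betaB (α + β + k + 1) (γ + m + 1) / Gamma (k + α - m + 1)| ≤
        C * (m : ℝ) ^ (-2 * α - β - 3 / 2) := by
  obtain ⟨C₁, hC₁, hdelta⟩ := bound_of_isBigO_nat_atTop (jacobiDelta_isBigO β γ)
  obtain ⟨C₂, hC₂, hbeta⟩ :=
    exists_abs_betaB_add_natCast_left_le (s := α + β + 1) (by linarith) hγ
  obtain ⟨C₃, hC₃, hGamma⟩ := exists_abs_inv_Gamma_add_sub_le α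
  refine ⟨C₁ * C₂ * C₃, by positivity, fun m k hm => ?_⟩
  have hm₀ : (0 : ℝ) < m := by exact_mod_cast hm
  have hD : 0 < (m : ℝ) ^ (1 / 2 : ℝ) / m.factorial := by positivity
  have hexponent : (m : ℝ) ^ (-2 * α - β - 3 / 2) =
      (m : ℝ) ^ (1 / 2 : ℝ) * (m : ℝ) ^ (-(α + β + 1)) * (m : ℝ) ^ (-α - 1) := by
    rw [← rpow_add hm₀, ← rpow_add hm₀]
    ring_nf
  have hdelta_m := hdelta hD.ne'
  rw [norm_of_nonneg hD.le, norm_of_nonneg (jacobiDelta_nonneg β γ m)] at hdelta_m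
  rw [add_right_comm _ (k : ℝ), div_eq_mul_inv, abs_mul]
  calc jacobiDelta β γ m *
        (|betaB (α + β + 1 + k) (γ + m + 1)| * |(Gamma (k + α - m + 1))⁻¹|)
      ≤ C₁ * ((m : ℝ) ^ (1 / 2 : ℝ) / m.factorial) *
        (C₂ * (m : ℝ) ^ (-(α + β + 1)) * (C₃ * ((m : ℝ) ^ (-α - 1) * m.factorial))) := by
        gcongr
        exacts [hbeta m k hm, hGamma m k hm]
    _ = C₁ * C₂ * C₃ * (m : ℝ) ^ (-2 * α - β - 3 / 2) := by
        rw [hexponent]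
        field_simp

end JacobiDelta

section Ctilde

lemma Ctilde_summand_eq (β γ : ℝ) {n k i : ℕ} (hik : i ≤ k) (hkn : k ≤ n) :
    (n.choose i : ℝ) * genBinom (n + β) (n - i) * genBinom (n + γ) i * k.choose i *
        genBinom (n - i) (k - i) * i.factorial =
      n.choose i * k.choose i * (Gamma (n + β + 1) * Gamma (n + γ + 1) /
        (Gamma (β + i + 1) * Gamma (γ + (n - i : ℕ) + 1) *
          ((k - i).factorial * (n - k).factorial))) := by
  have hin : i ≤ n := hik.trans hkn
  have hβ : (n : ℝ) + β - (n - i : ℕ) + 1 = β + i + 1 := by push_cast [hin]; ring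
  have hγ : (n : ℝ) + γ - i + 1 = γ + (n - i : ℕ) + 1 := by push_cast [hin]; ring
  have hnk : (n : ℝ) - i - (k - i : ℕ) + 1 = (n - k : ℕ) + 1 := by push_cast [hik, hkn]; ring
  rw [genBinom, genBinom, genBinom, hβ, hγ, hnk, ← Nat.cast_sub hin, Gamma_nat_eq_factorial,
    Gamma_nat_eq_factorial]
  field_simp

lemma sum_choose_mul_choose_le_four_pow {n k : ℕ} (hkn : k ≤ n) :
    ∑ i ∈ Finset.range (k + 1), n.choose i * k.choose i ≤ 4 ^ n :=
  calc ∑ i ∈ Finset.range (k + 1), n.choose i * k.choose i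
      ≤ ∑ i ∈ Finset.range (k + 1), 2 ^ n * k.choose i := by
        gcongr
        exact Nat.choose_le_two_pow _ _
    _ = 2 ^ n * 2 ^ k := by rw [← Finset.mul_sum, Nat.sum_range_choose]
    _ ≤ 2 ^ n * 2 ^ n := by gcongr; norm_num
    _ = 4 ^ n := (mul_pow 2 2 n).symm

lemma exists_abs_Ctilde_le {β γ : ℝ} (hβ : -1 < β) (hγ : -1 < γ) :
    ∃ C : ℝ, 0 < C ∧ ∀ n k : ℕ, k ≤ n →
      |Ctilde β γ n k| ≤ C * 4 ^ n * (Gamma (n + β + 1) * Gamma (n + γ + 1)) := by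
  obtain ⟨c, hc, hle⟩ := exists_pos_forall_le_Gamma
  refine ⟨(c * c)⁻¹, by positivity, fun n k hkn => ?_⟩
  have hn : (0 : ℝ) ≤ n := n.cast_nonneg
  set G := Gamma (n + β + 1) * Gamma (n + γ + 1)
  have hG : 0 < G := mul_pos (Gamma_pos_of_pos (by linarith)) (Gamma_pos_of_pos (by linarith))
  have hsummand (i : ℕ) (hi : i ∈ Finset.range (k + 1)) :
      |(n.choose i : ℝ) * genBinom (n + β) (n - i) * genBinom (n + γ) i * k.choose i *
        genBinom (n - i) (k - i) * i.factorial| ≤ n.choose i * k.choose i * (G / (c * c)) := by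
    have hΓβ : c ≤ Gamma (β + i + 1) := hle _ (by linarith [i.cast_nonneg (α := ℝ)])
    have hΓγ : c ≤ Gamma (γ + (n - i : ℕ) + 1) :=
      hle _ (by linarith [(n - i).cast_nonneg (α := ℝ)])
    have hfactorials : (1 : ℝ) ≤ (k - i).factorial * (n - k).factorial := by
      exact_mod_cast Nat.mul_pos (k - i).factorial_pos (n - k).factorial_pos
    have hden : c * c ≤ Gamma (β + i + 1) * Gamma (γ + (n - i : ℕ) + 1) *
        ((k - i).factorial * (n - k).factorial) :=
      (mul_le_mul hΓβ hΓγ hc.le (hc.le.trans hΓβ)).trans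
        (le_mul_of_one_le_right (mul_nonneg (hc.le.trans hΓβ) (hc.le.trans hΓγ)) hfactorials)
    have hden_pos := (mul_pos hc hc).trans_le hden
    rw [Ctilde_summand_eq β γ (Finset.mem_range_succ_iff.1 hi) hkn, abs_of_nonneg (by positivity)]
    gcongr
  calc |Ctilde β γ n k|
      ≤ ∑ i ∈ Finset.range (k + 1), n.choose i * k.choose i * (G / (c * c)) :=
        (Finset.abs_sum_le_sum_abs _ _).trans (Finset.sum_le_sum hsummand)
    _ = (∑ i ∈ Finset.range (k + 1), n.choose i * k.choose i : ℕ) * (G / (c * c)) := by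
        push_cast
        rw [Finset.sum_mul]
    _ ≤ 4 ^ n * (G / (c * c)) := by
        gcongr
        exact_mod_cast sum_choose_mul_choose_le_four_pow hkn
    _ = (c * c)⁻¹ * 4 ^ n * G := by ring

lemma exists_succ_mul_four_pow_le_factorial_div :
    ∃ C : ℝ, 0 < C ∧ ∀ n : ℕ, (n + 1 : ℝ) * 4 ^ n ≤ C * (n.factorial / 4 ^ n) := by
  obtain ⟨B, hB⟩ := (FloorSemiring.tendsto_pow_div_factorial_atTop (32 : ℝ)).bddAbove_range
  have hle (n : ℕ) : (32 : ℝ) ^ n / n.factorial ≤ B := hB (mem_range_self n)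
  refine ⟨B, zero_lt_one.trans_le (by simpa using hle 0), fun n => ?_⟩
  have hsucc : (n + 1 : ℝ) ≤ 2 ^ n := by exact_mod_cast Nat.lt_two_pow_self
  rw [← mul_div_assoc, le_div_iff₀ (by positivity)]
  calc (n + 1 : ℝ) * 4 ^ n * 4 ^ n ≤ 2 ^ n * 4 ^ n * 4 ^ n := by gcongr
    _ = 32 ^ n := by rw [← mul_pow, ← mul_pow]; norm_num
    _ ≤ B * n.factorial := (div_le_iff₀ (by positivity)).1 (hle n)

lemma exists_jacobiDelta_mul_sum_abs_Ctilde_le_cCoef {β γ : ℝ} (hβ : -1 < β) (hγ : -1 < γ) :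
    ∃ C : ℝ, 0 < C ∧ ∀ n : ℕ,
      jacobiDelta β γ n * ∑ k ∈ Finset.range (n + 1), |Ctilde β γ n k| ≤ C * cCoef β γ n := by
  obtain ⟨C₁, hC₁, hCtilde⟩ := exists_abs_Ctilde_le hβ hγ
  obtain ⟨C₂, hC₂, hfactorial⟩ := exists_succ_mul_four_pow_le_factorial_div
  refine ⟨C₁ * C₂, by positivity, fun n => ?_⟩
  have hn : (0 : ℝ) ≤ n := n.cast_nonneg
  have hG : 0 < Gamma (n + β + 1) * Gamma (n + γ + 1) :=
    mul_pos (Gamma_pos_of_pos (by linarith)) (Gamma_pos_of_pos (by linarith))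
  have hsum : ∑ k ∈ Finset.range (n + 1), |Ctilde β γ n k| ≤
      C₁ * (Gamma (n + β + 1) * Gamma (n + γ + 1)) * ((n + 1) * 4 ^ n) := by
    refine (Finset.sum_le_card_nsmul _ _ _ fun k hk =>
      hCtilde n k (Finset.mem_range_succ_iff.1 hk)).trans_eq ?_
    rw [Finset.card_range, nsmul_eq_mul, Nat.cast_succ]
    ring
  calc jacobiDelta β γ n * ∑ k ∈ Finset.range (n + 1), |Ctilde β γ n k|
      ≤ jacobiDelta β γ n * (C₁ * (Gamma (n + β + 1) * Gamma (n + γ + 1)) *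
          (C₂ * (n.factorial / 4 ^ n))) := by
        gcongr
        · exact jacobiDelta_nonneg β γ n
        · exact hsum.trans (mul_le_mul_of_nonneg_left (hfactorial n) (by positivity))
    _ = C₁ * C₂ * cCoef β γ n := by
        rw [cCoef]
        ring

end Ctilde

lemma exists_abs_Acoef_le {α β γ : ℝ} (hαβ : -2 < α + β) (hβ : -1 < β) (hγ : -1 < γ) :
    ∃ C : ℝ, 0 < C ∧ ∀ m n : ℕ, 1 ≤ m →
      |Acoef α β γ m n| ≤ C * (m : ℝ) ^ (-2 * α - β - 3 / 2) * cCoef β γ n := by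
  obtain ⟨C₁, hC₁, hm_factor⟩ := exists_jacobiDelta_mul_abs_betaB_div_Gamma_le hαβ hγ
  obtain ⟨C₂, hC₂, hn_factor⟩ := exists_jacobiDelta_mul_sum_abs_Ctilde_le_cCoef hβ hγ
  refine ⟨C₁ * C₂, by positivity, fun m n hm => ?_⟩
  set E : ℝ := (m : ℝ) ^ (-2 * α - β - 3 / 2)
  have hδm := jacobiDelta_nonneg β γ m
  have hδn := jacobiDelta_nonneg β γ n
  calc |Acoef α β γ m n|
      ≤ jacobiDelta β γ m * jacobiDelta β γ n * ∑ k ∈ Finset.range (n + 1),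
          |Ctilde β γ n k| * |betaB (α + β + k + 1) (γ + m + 1) / Gamma (k + α - m + 1)| := by
        rw [Acoef, abs_mul, abs_of_nonneg (mul_nonneg hδm hδn)]
        gcongr
        refine (Finset.abs_sum_le_sum_abs _ _).trans_eq (Finset.sum_congr rfl fun k _ => ?_)
        rw [mul_div_assoc, abs_mul, abs_mul, abs_neg_one_pow, one_mul]
    _ = jacobiDelta β γ n * ∑ k ∈ Finset.range (n + 1), |Ctilde β γ n k| *
          (jacobiDelta β γ m *
            |betaB (α + β + k + 1) (γ + m + 1) / Gamma (k + α - m + 1)|) := by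
        simp only [Finset.mul_sum]
        exact Finset.sum_congr rfl fun k _ => by ring
    _ ≤ jacobiDelta β γ n * ∑ k ∈ Finset.range (n + 1), |Ctilde β γ n k| * (C₁ * E) := by
        gcongr _ * ∑ k ∈ _, _ * ?_ with k
        exact hm_factor m k hm
    _ = C₁ * E * (jacobiDelta β γ n * ∑ k ∈ Finset.range (n + 1), |Ctilde β γ n k|) := by
        rw [← Finset.sum_mul]
        ring
    _ ≤ C₁ * E * (C₂ * cCoef β γ n) :=
        mul_le_mul_of_nonneg_left (hn_factor n) (by positivity)
    _ = C₁ * C₂ * E * cCoef β γ n := by ring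

theorem stmt6_general (α β γ : ℝ) (hβ : -1 < β) (hγ : -1 < γ) (hαγ : -2 < α + γ)
    (f : ℕ → ℝ) (hf : Summable fun n : ℕ => |f n| * cCoef β γ n) :
    ∃ C : ℝ, 0 < C ∧ ∀ m : ℕ, 1 ≤ m →
      Summable (fun n : ℕ => |f n * Acoef α γ β m n|) ∧
      (∑' n : ℕ, |f n * Acoef α γ β m n|) ≤ C * (m : ℝ) ^ (-2 * α - γ - 3 / 2) := by
  obtain ⟨C, hC, hA⟩ := exists_abs_Acoef_le hαγ hγ hβ
  refine ⟨C * (|∑' n, |f n| * cCoef β γ n| + 1), by positivity, fun m hm => ?_⟩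
  set E : ℝ := (m : ℝ) ^ (-2 * α - γ - 3 / 2)
  have hterm (n : ℕ) : |f n * Acoef α γ β m n| ≤ C * E * (|f n| * cCoef β γ n) := by
    rw [abs_mul, cCoef_comm, mul_left_comm]
    exact mul_le_mul_of_nonneg_left (hA m n hm) (abs_nonneg _)
  have hmajorant := hf.mul_left (C * E)
  have hsummable := Summable.of_nonneg_of_le (fun _ => abs_nonneg _) hterm hmajorant
  refine ⟨hsummable, ?_⟩
  calc ∑' n, |f n * Acoef α γ β m n|
      ≤ C * E * ∑' n, |f n| * cCoef β γ n :=
        (hsummable.tsum_le_tsum hterm hmajorant).trans_eq tsum_mul_left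
    _ ≤ C * E * (|∑' n, |f n| * cCoef β γ n| + 1) := by
        gcongr
        exact (le_abs_self _).trans (by linarith)
    _ = C * (|∑' n, |f n| * cCoef β γ n| + 1) * E := by ring

theorem stmt6 (α β γ : ℝ) (hβ : β ∈ Set.Icc (-(1 : ℝ) / 2) (1 / 2))
    (hγ : γ ∈ Set.Icc (-(1 : ℝ) / 2) (1 / 2)) (hα : α ∈ Set.Ioo (-1 : ℝ) 0)
    (f : ℕ → ℝ) (hf : Summable fun n : ℕ => |f n| * cCoef β γ n) :
    ∃ C : ℝ, 0 < C ∧ ∀ m : ℕ, 1 ≤ m →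
      Summable (fun n : ℕ => |f n * Acoef α γ β m n|) ∧
      (∑' n : ℕ, |f n * Acoef α γ β m n|) ≤ C * (m : ℝ) ^ (-2 * α - γ - 3 / 2) :=
  stmt6_general α β γ (by linarith [hβ.1]) (by linarith [hγ.1]) (by linarith [hα.1, hγ.1]) f hf
end

section
/- For all real x > 1 and δ ∈ ℝ with x+δ > 1: Γ(x+δ)/Γ(x) < e^{-δ}·(1+δ/x)^{x+δ-1/2}·x^{ξ+δ-1/2}, where ξ is the Euler–Mascheroni constant; consequently, for each fixed δ, Γ(x+δ)/Γ(x) = O(x^{ξ+δ-1/2}) as x → ∞. -/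
open Real MeasureTheory Set Filter

open Asymptotics

/-!
Let `ψ` be the logarithmic derivative of `Γ` and `θ x = x (log x - ψ x)`.
The function `log Γ(x) - (x - c) log x + x` equals `1`
at `x = 1` and has derivative `(c - θ x) / x`, so the bounds `x^(x-ξ) / e^(x-1) ≤ Γ(x)` for `x > 0`
and `Γ(x) < x^(x-1/2) / e^(x-1)` for `x > 1` follow once `θ` is known to be strictly decreasing on
`(0, ∞)`, with `θ 1 = ξ` and `θ x → 1/2` at infinity.

For the monotonicity, the functional equation of `ψ` makes the second difference
`θ x - 2 θ (x + 1) + θ (x + 2)` elementary, with derivative `log (1 - u²) + u² < 0`,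
where `u = 1 / (x + 1)`. Hence for `x < y` the sequence `θ (x + n) - θ (y + n)` is strictly convex;
as it tends to `0`, it is positive.
-/

open scoped Topology

local notation "ξ" => eulerMascheroniConstant

local notation "ψ" => logDeriv Gamma

lemma pos_of_sndDiff_pos_of_tendsto_zero {u : ℕ → ℝ}
    (hconvex : ∀ n, 0 < u n - 2 * u (n + 1) + u (n + 2)) (hlim : Tendsto u atTop (𝓝 0)) (n : ℕ) :
    0 < u n := by
  have diff_strictMono : StrictMono fun n ↦ u (n + 1) - u n :=
    strictMono_nat_of_lt_succ fun n ↦ by linarith [hconvex n]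
  have diff_tendsto : Tendsto (fun n ↦ u (n + 1) - u n) atTop (𝓝 0) := by
    simpa using (hlim.comp (tendsto_add_atTop_nat 1)).sub hlim
  have u_strictAnti : StrictAnti u := strictAnti_nat_of_succ_lt fun n ↦
    sub_neg.1 ((diff_strictMono n.lt_succ_self).trans_le
      (diff_strictMono.monotone.ge_of_tendsto diff_tendsto (n + 1)))
  exact (u_strictAnti.antitone.le_of_tendsto hlim (n + 1)).trans_lt (u_strictAnti n.lt_succ_self)

lemma nonneg_of_add_one_le_of_tendsto_zero {u : ℝ → ℝ} (hstep : ∀ x, 0 < x → u (x + 1) ≤ u x)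
    (hlim : Tendsto u atTop (𝓝 0)) {x : ℝ} (hx : 0 < x) : 0 ≤ u x := by
  have shift_antitone : Antitone fun n : ℕ ↦ u (x + n) := antitone_nat_of_succ_le fun n ↦ by
    simpa [add_assoc] using hstep (x + n) (by positivity)
  have shift_tendsto : Tendsto (fun n : ℕ ↦ u (x + n)) atTop (𝓝 0) :=
    hlim.comp (tendsto_atTop_add_const_left _ x tendsto_natCast_atTop_atTop)
  simpa using shift_antitone.le_of_tendsto shift_tendsto 0

lemma log_add_one_sub_log_le {x : ℝ} (hx : 0 < x) :
    log (x + 1) - log x ≤ (x⁻¹ + (x + 1)⁻¹) / 2 := by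
  have one_le_ratio : 1 ≤ (x + 1) / x := by rw [le_div_iff₀ hx]; linarith
  calc log (x + 1) - log x = log ((x + 1) / x) := (log_div (by positivity) hx.ne').symm
    _ ≤ sinh (log ((x + 1) / x)) := self_le_sinh_iff.2 (log_nonneg one_le_ratio)
    _ = (x⁻¹ + (x + 1)⁻¹) / 2 := by
      rw [sinh_log (by positivity)]
      field_simp
      ring

lemma two_div_two_mul_add_one_le_log_sub_log {x : ℝ} (hx : 0 < x) :
    2 / (2 * x + 1) ≤ log (x + 1) - log x := by
  calc 2 / (2 * x + 1) = 2 * x⁻¹ / (x⁻¹ + 2) := by field_simp; ring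
    _ ≤ log (1 + x⁻¹) := le_log_one_add_of_nonneg (by positivity)
    _ = log (x + 1) - log x := by
      rw [← log_div (by positivity) hx.ne']
      congr 1
      field_simp

lemma strictAntiOn_sndDiff_mul_log_sub_inv :
    StrictAntiOn (fun x : ℝ ↦ x * log x - 2 * ((x + 1) * log (x + 1)) + (x + 2) * log (x + 2)
      - (x + 1)⁻¹) (Ioi 0) := by
  have hasDerivAt_self : ∀ x ∈ Ioi (0 : ℝ), HasDerivAt (fun x : ℝ ↦ x * log x
      - 2 * ((x + 1) * log (x + 1)) + (x + 2) * log (x + 2) - (x + 1)⁻¹)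
      (log x - 2 * log (x + 1) + log (x + 2) + ((x + 1) ^ 2)⁻¹) x := by
    intro x (hx : 0 < x)
    have h₀ := hasDerivAt_mul_log hx.ne'
    have h₁ := (hasDerivAt_mul_log (x := x + 1) (by positivity)).comp_add_const x 1
    have h₂ := (hasDerivAt_mul_log (x := x + 2) (by positivity)).comp_add_const x 2
    have h₃ := (hasDerivAt_inv (x := x + 1) (by positivity)).comp_add_const x 1
    exact (((h₀.sub (h₁.const_mul 2)).add h₂).sub h₃).congr_deriv (by ring)
  refine strictAntiOn_of_hasDerivWithinAt_neg (convex_Ioi 0)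
    (fun x hx ↦ (hasDerivAt_self x hx).continuousAt.continuousWithinAt)
    (fun x hx ↦ (hasDerivAt_self x (interior_subset hx)).hasDerivWithinAt) fun x hx ↦ ?_
  have hx : 0 < x := interior_subset hx
  have log_ratio : log (x * (x + 2) / (x + 1) ^ 2) = log x - 2 * log (x + 1) + log (x + 2) := by
    rw [log_div (by positivity) (by positivity), log_mul (by positivity) (by positivity), log_pow]
    push_cast
    ring
  have ratio_eq : x * (x + 2) / (x + 1) ^ 2 = 1 - ((x + 1) ^ 2)⁻¹ := by field_simp; ring
  have ratio_ne_one : x * (x + 2) / (x + 1) ^ 2 ≠ 1 := by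
    have : 0 < ((x + 1) ^ 2)⁻¹ := by positivity
    linarith
  linarith [log_lt_sub_one_of_pos (by positivity) ratio_ne_one]

lemma hasDerivAt_log_Gamma {x : ℝ} (hx : 0 < x) : HasDerivAt (log ∘ Gamma) (ψ x) x :=
  (differentiableOn_Gamma_Ioi.differentiableAt (Ioi_mem_nhds hx)).hasDerivAt.log
    (Gamma_pos_of_pos hx).ne'

lemma log_Gamma_add_one {x : ℝ} (hx : 0 < x) : log (Gamma (x + 1)) = log x + log (Gamma x) := by
  rw [Gamma_add_one hx.ne', log_mul hx.ne' (Gamma_pos_of_pos hx).ne']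

lemma logDeriv_Gamma_one : ψ 1 = -ξ := by
  rw [logDeriv_apply, hasDerivAt_Gamma_one.deriv, Gamma_one, div_one]

lemma logDeriv_Gamma_add_one {x : ℝ} (hx : 0 < x) : ψ (x + 1) = ψ x + x⁻¹ := by
  have shifted := (hasDerivAt_log_Gamma (add_pos hx one_pos)).comp_add_const x 1
  have expanded := (hasDerivAt_log hx.ne').add (hasDerivAt_log_Gamma hx)
  have eventually_eq : (fun y ↦ (log ∘ Gamma) (y + 1)) =ᶠ[𝓝 x] log + log ∘ Gamma := by
    filter_upwards [Ioi_mem_nhds hx] with y hy using log_Gamma_add_one hy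
  rw [shifted.unique (expanded.congr_of_eventuallyEq eventually_eq), add_comm]

lemma slope_log_Gamma_add_one {x : ℝ} (hx : 0 < x) : slope (log ∘ Gamma) x (x + 1) = log x := by
  simp [slope_def_field, log_Gamma_add_one hx]

lemma logDeriv_Gamma_le_log {x : ℝ} (hx : 0 < x) : ψ x ≤ log x :=
  slope_log_Gamma_add_one hx ▸ convexOn_log_Gamma.le_slope_of_hasDerivAt hx
    (add_pos hx one_pos) (lt_add_one x) (hasDerivAt_log_Gamma hx)

lemma log_sub_inv_le_logDeriv_Gamma {x : ℝ} (hx : 0 < x) : log x - x⁻¹ ≤ ψ x := by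
  have slope_le := convexOn_log_Gamma.slope_le_of_hasDerivAt hx (add_pos hx one_pos)
    (lt_add_one x) (hasDerivAt_log_Gamma (add_pos hx one_pos))
  rw [slope_log_Gamma_add_one hx, logDeriv_Gamma_add_one hx] at slope_le
  linarith

lemma tendsto_log_sub_logDeriv_Gamma : Tendsto (fun x ↦ log x - ψ x) atTop (𝓝 0) := by
  refine tendsto_of_tendsto_of_tendsto_of_le_of_le' tendsto_const_nhds tendsto_inv_atTop_zero ?_ ?_
    <;> filter_upwards [eventually_gt_atTop 0] with x hx
  · linarith [logDeriv_Gamma_le_log hx]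
  · linarith [log_sub_inv_le_logDeriv_Gamma hx]

lemma inv_div_two_le_log_sub_logDeriv_Gamma {x : ℝ} (hx : 0 < x) : x⁻¹ / 2 ≤ log x - ψ x := by
  have hlim : Tendsto (fun x : ℝ ↦ log x - ψ x - x⁻¹ / 2) atTop (𝓝 0) := by
    simpa using tendsto_log_sub_logDeriv_Gamma.sub (tendsto_inv_atTop_zero.div_const 2)
  refine sub_nonneg.1 (nonneg_of_add_one_le_of_tendsto_zero (fun y hy ↦ ?_) hlim hx)
  rw [logDeriv_Gamma_add_one hy]
  linarith [log_add_one_sub_log_le hy]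

lemma log_sub_logDeriv_Gamma_le {x : ℝ} (hx : 0 < x) :
    log x - ψ x ≤ x⁻¹ / 2 + x⁻¹ ^ 2 / 8 := by
  have hlim : Tendsto (fun x : ℝ ↦ x⁻¹ / 2 + x⁻¹ ^ 2 / 8 - (log x - ψ x)) atTop (𝓝 0) := by
    have inv_tendsto : Tendsto (fun x : ℝ ↦ x⁻¹) atTop (𝓝 0) := tendsto_inv_atTop_zero
    simpa using ((inv_tendsto.div_const 2).add ((inv_tendsto.pow 2).div_const 8)).sub
      tendsto_log_sub_logDeriv_Gamma
  refine sub_nonneg.1 (nonneg_of_add_one_le_of_tendsto_zero (fun y hy ↦ ?_) hlim hx)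
  have rational_le : (y⁻¹ + (y + 1)⁻¹) / 2 - 2 / (2 * y + 1)
      ≤ (y⁻¹ ^ 2 - (y + 1)⁻¹ ^ 2) / 8 := by
    rw [← sub_nonneg]
    have : (y⁻¹ ^ 2 - (y + 1)⁻¹ ^ 2) / 8 - ((y⁻¹ + (y + 1)⁻¹) / 2 - 2 / (2 * y + 1))
        = 1 / (8 * y ^ 2 * (y + 1) ^ 2 * (2 * y + 1)) := by
      field_simp
      ring
    rw [this]
    positivity
  rw [logDeriv_Gamma_add_one hy]
  linarith [two_div_two_mul_add_one_le_log_sub_log hy]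

/-- The function `θ x = x (log x - ψ x)`, where `ψ` is the digamma function. It measures how
far `ψ` lies below the logarithm, on the scale `1 / x`. -/
noncomputable def digammaGap (x : ℝ) : ℝ := x * (log x - ψ x)

lemma digammaGap_one : digammaGap 1 = ξ := by
  simp [digammaGap, logDeriv_Gamma_one]

lemma tendsto_digammaGap : Tendsto digammaGap atTop (𝓝 (1 / 2)) := by
  have upper_tendsto : Tendsto (fun x : ℝ ↦ 1 / 2 + x⁻¹ / 8) atTop (𝓝 (1 / 2)) := by
    simpa only [zero_div, add_zero] using
      ((tendsto_inv_atTop_zero (𝕜 := ℝ)).div_const 8).const_add (1 / 2)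
  refine tendsto_of_tendsto_of_tendsto_of_le_of_le' tendsto_const_nhds upper_tendsto ?_ ?_
    <;> filter_upwards [eventually_gt_atTop 0] with x hx
  · calc 1 / 2 = x * (x⁻¹ / 2) := by field_simp
      _ ≤ digammaGap x := by
        unfold digammaGap
        gcongr
        exact inv_div_two_le_log_sub_logDeriv_Gamma hx
  · calc digammaGap x ≤ x * (x⁻¹ / 2 + x⁻¹ ^ 2 / 8) := by
          unfold digammaGap
          gcongr
          exact log_sub_logDeriv_Gamma_le hx
      _ = 1 / 2 + x⁻¹ / 8 := by field_simp

lemma digammaGap_sndDiff {x : ℝ} (hx : 0 < x) :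
    digammaGap x - 2 * digammaGap (x + 1) + digammaGap (x + 2) =
      x * log x - 2 * ((x + 1) * log (x + 1)) + (x + 2) * log (x + 2) - (x + 1)⁻¹ := by
  have digamma_add_two : ψ (x + 2) = ψ x + x⁻¹ + (x + 1)⁻¹ := by
    rw [← logDeriv_Gamma_add_one hx, ← logDeriv_Gamma_add_one (add_pos hx one_pos), add_assoc,
      one_add_one_eq_two]
  rw [digammaGap, digammaGap, digammaGap, digamma_add_two, logDeriv_Gamma_add_one hx]
  field_simp
  ring

lemma strictAntiOn_digammaGap : StrictAntiOn digammaGap (Ioi 0) := by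
  intro x (hx : 0 < x) y (hy : 0 < y) hxy
  have shift_tendsto (z : ℝ) : Tendsto (fun n : ℕ ↦ digammaGap (z + n)) atTop (𝓝 (1 / 2)) :=
    tendsto_digammaGap.comp (tendsto_atTop_add_const_left _ z tendsto_natCast_atTop_atTop)
  have difference_tendsto :
      Tendsto (fun n : ℕ ↦ digammaGap (x + n) - digammaGap (y + n)) atTop (𝓝 0) := by
    simpa using (shift_tendsto x).sub (shift_tendsto y)
  have difference_pos := pos_of_sndDiff_pos_of_tendsto_zero (fun n ↦ ?_) difference_tendsto 0
  · simpa using difference_pos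
  have hxn : 0 < x + n := by positivity
  have hyn : 0 < y + n := by positivity
  have sndDiff_lt := strictAntiOn_sndDiff_mul_log_sub_inv hxn hyn (by linarith)
  simp only [← digammaGap_sndDiff hxn, ← digammaGap_sndDiff hyn] at sndDiff_lt
  push_cast
  simp only [← add_assoc]
  linarith

lemma one_half_lt_digammaGap {x : ℝ} (hx : 0 < x) : 1 / 2 < digammaGap x := by
  have hx' : x + 1 ∈ Ioi (0 : ℝ) := add_pos hx one_pos
  refine lt_of_le_of_lt (le_of_tendsto tendsto_digammaGap ?_)
    (strictAntiOn_digammaGap hx hx' (lt_add_one x))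
  filter_upwards [eventually_ge_atTop (x + 1)] with y hy
  exact strictAntiOn_digammaGap.antitoneOn hx' (lt_of_lt_of_le hx' hy) hy

/-- The logarithm of `Γ(x) e^x / x^(x - c)`, the ratio of `Γ` to a Stirling-type approximation whose
power of `x` is shifted by `c`. -/
noncomputable def logGammaStirlingRatio (c x : ℝ) : ℝ := log (Gamma x) - (x - c) * log x + x

lemma logGammaStirlingRatio_one (c : ℝ) : logGammaStirlingRatio c 1 = 1 := by
  simp [logGammaStirlingRatio]

lemma Gamma_eq_rpow_div_exp_mul {x : ℝ} (hx : 0 < x) (c : ℝ) :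
    Gamma x = x ^ (x - c) / exp (x - 1) * exp (logGammaStirlingRatio c x - 1) := by
  rw [rpow_def_of_pos hx, ← exp_sub, ← exp_add, ← exp_log (Gamma_pos_of_pos hx)]
  simp only [logGammaStirlingRatio]
  ring_nf

lemma hasDerivAt_logGammaStirlingRatio (c : ℝ) {x : ℝ} (hx : 0 < x) :
    HasDerivAt (logGammaStirlingRatio c) ((c - digammaGap x) / x) x := by
  have h := ((hasDerivAt_log_Gamma hx).sub
    (((hasDerivAt_id x).sub_const c).mul (hasDerivAt_log hx.ne'))).add (hasDerivAt_id x)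
  refine h.congr_deriv ?_
  simp only [digammaGap, id]
  field_simp
  ring

lemma strictAntiOn_logGammaStirlingRatio_one_half :
    StrictAntiOn (logGammaStirlingRatio (1 / 2)) (Ioi 0) :=
  strictAntiOn_of_hasDerivWithinAt_neg (convex_Ioi 0)
    (fun _ hx ↦ (hasDerivAt_logGammaStirlingRatio _ hx).continuousAt.continuousWithinAt)
    (fun _ hx ↦ (hasDerivAt_logGammaStirlingRatio _ (interior_subset hx)).hasDerivWithinAt)
    (fun _ hx ↦ div_neg_of_neg_of_pos (sub_neg.2 (one_half_lt_digammaGap (interior_subset hx)))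
      (interior_subset hx))

lemma isMinOn_logGammaStirlingRatio_eulerMascheroniConstant :
    IsMinOn (logGammaStirlingRatio ξ) (Ioi 0) 1 := by
  have hasDeriv {x : ℝ} (hx : 0 < x) := hasDerivAt_logGammaStirlingRatio ξ hx
  refine isMinOn_Ioi_of_deriv (hasDeriv one_pos).continuousAt
    (fun x hx ↦ (hasDeriv hx.1).differentiableAt.differentiableWithinAt)
    (fun x hx ↦ (hasDeriv (one_pos.trans hx)).differentiableAt.differentiableWithinAt)
    (fun x hx ↦ ?_) (fun x (hx : 1 < x) ↦ ?_)
  · rw [(hasDeriv hx.1).deriv, ← digammaGap_one]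
    exact div_nonpos_of_nonpos_of_nonneg
      (sub_nonpos.2 (strictAntiOn_digammaGap hx.1 (mem_Ioi.2 one_pos) hx.2).le) hx.1.le
  · have hx₀ : 0 < x := one_pos.trans hx
    rw [(hasDeriv hx₀).deriv, ← digammaGap_one]
    exact div_nonneg (sub_nonneg.2 (strictAntiOn_digammaGap (mem_Ioi.2 one_pos) hx₀ hx).le) hx₀.le

lemma Gamma_lt_rpow_sub_one_half_div_exp {x : ℝ} (hx : 1 < x) :
    Gamma x < x ^ (x - 1 / 2) / exp (x - 1) := by
  have hx₀ : 0 < x := one_pos.trans hx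
  have ratio_lt : logGammaStirlingRatio (1 / 2) x < 1 :=
    (strictAntiOn_logGammaStirlingRatio_one_half (mem_Ioi.2 one_pos) hx₀ hx).trans_eq
      (logGammaStirlingRatio_one _)
  rw [Gamma_eq_rpow_div_exp_mul hx₀ (1 / 2)]
  exact mul_lt_of_lt_one_right (by positivity) (exp_lt_one_iff.2 (by linarith))

lemma rpow_sub_eulerMascheroniConstant_div_exp_le_Gamma {x : ℝ} (hx : 0 < x) :
    x ^ (x - ξ) / exp (x - 1) ≤ Gamma x := by
  have one_le_ratio : 1 ≤ logGammaStirlingRatio ξ x :=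
    logGammaStirlingRatio_one ξ ▸ isMinOn_logGammaStirlingRatio_eulerMascheroniConstant hx
  rw [Gamma_eq_rpow_div_exp_mul hx ξ]
  exact le_mul_of_one_le_right (by positivity) (one_le_exp (by linarith))

lemma stirling_quotient_eq {x δ : ℝ} (hx : 0 < x) (hxδ : 0 < x + δ) (a c : ℝ) :
    (x + δ) ^ (x + δ - a) / exp (x + δ - 1) / (x ^ (x - c) / exp (x - 1)) =
      exp (-δ) * (1 + δ / x) ^ (x + δ - a) * x ^ (c + δ - a) := by
  have base_eq : 1 + δ / x = (x + δ) / x := by field_simp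
  rw [base_eq, rpow_def_of_pos hxδ, rpow_def_of_pos hx, rpow_def_of_pos hx,
    rpow_def_of_pos (div_pos hxδ hx), log_div hxδ.ne' hx.ne']
  simp only [← exp_sub, ← exp_add]
  ring_nf

lemma Gamma_add_div_Gamma_lt {x δ : ℝ} (hx : 0 < x) (hxδ : 1 < x + δ) :
    Gamma (x + δ) / Gamma x <
      exp (-δ) * (1 + δ / x) ^ (x + δ - 1 / 2) * x ^ (ξ + δ - 1 / 2) := by
  rw [← stirling_quotient_eq hx (one_pos.trans hxδ)]
  exact div_lt_div₀ (Gamma_lt_rpow_sub_one_half_div_exp hxδ)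
    (rpow_sub_eulerMascheroniConstant_div_exp_le_Gamma hx) (by positivity) (by positivity)

lemma tendsto_one_add_div_rpow_add_exp (δ a : ℝ) :
    Tendsto (fun x : ℝ ↦ (1 + δ / x) ^ (x + a)) atTop (𝓝 (exp δ)) := by
  have base_tendsto : Tendsto (fun x : ℝ ↦ 1 + δ / x) atTop (𝓝 1) := by
    simpa using ((tendsto_const_nhds (x := δ)).div_atTop tendsto_id).const_add 1
  have product_tendsto := (tendsto_one_add_div_rpow_exp δ).mul
    (base_tendsto.rpow_const (p := a) (Or.inl one_ne_zero))
  rw [one_rpow, mul_one] at product_tendsto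
  refine product_tendsto.congr' ?_
  filter_upwards [base_tendsto.eventually_const_lt one_pos] with x hx using (rpow_add hx x a).symm

lemma Gamma_add_div_Gamma_isBigO (δ : ℝ) :
    (fun x : ℝ ↦ Gamma (x + δ) / Gamma x) =O[atTop] fun x : ℝ ↦ x ^ (ξ + δ - 1 / 2) := by
  have factor_isBigO : (fun x : ℝ ↦ exp (-δ) * (1 + δ / x) ^ (x + δ - 1 / 2))
      =O[atTop] fun _ ↦ (1 : ℝ) := by
    simpa only [add_sub_assoc] using
      ((tendsto_one_add_div_rpow_add_exp δ (δ - 1 / 2)).const_mul (exp (-δ))).isBigO_one ℝ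
  have bound_isBigO := factor_isBigO.mul
    (isBigO_refl (fun x : ℝ ↦ x ^ (ξ + δ - 1 / 2)) atTop)
  simp only [one_mul] at bound_isBigO
  refine IsBigO.trans (IsBigO.of_bound' ?_) bound_isBigO
  filter_upwards [eventually_gt_atTop 0, eventually_gt_atTop (1 - δ)] with x hx hxδ
  have hxδ : 1 < x + δ := by linarith
  have ratio_nonneg : 0 ≤ Gamma (x + δ) / Gamma x := by positivity
  rw [norm_of_nonneg ratio_nonneg]
  exact (Gamma_add_div_Gamma_lt hx hxδ).le.trans (le_norm_self _)

theorem stmt8_general :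
    (∀ x δ : ℝ, 0 < x → 1 < x + δ →
      Gamma (x + δ) / Gamma x <
        exp (-δ) * (1 + δ / x) ^ (x + δ - 1 / 2) * x ^ (ξ + δ - 1 / 2)) ∧
    ∀ δ : ℝ, (fun x : ℝ ↦ Gamma (x + δ) / Gamma x) =O[atTop]
      fun x : ℝ ↦ x ^ (ξ + δ - 1 / 2) :=
  ⟨fun _ _ ↦ Gamma_add_div_Gamma_lt, Gamma_add_div_Gamma_isBigO⟩

theorem stmt8 :
    (∀ x δ : ℝ, 1 < x → 1 < x + δ →
      Real.Gamma (x + δ) / Real.Gamma x <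
        Real.exp (-δ) * (1 + δ / x) ^ (x + δ - 1 / 2) *
          x ^ (Real.eulerMascheroniConstant + δ - 1 / 2)) ∧
    ∀ δ : ℝ, (fun x : ℝ => Real.Gamma (x + δ) / Real.Gamma x) =O[atTop]
      fun x : ℝ => x ^ (Real.eulerMascheroniConstant + δ - 1 / 2) := by
  exact ⟨fun x δ hx ↦ stmt8_general.1 x δ (one_pos.trans hx), stmt8_general.2⟩
end
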